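/- The following conditions are equivalent for a Banach space (Y,‖·‖_Y). (1) Y admits an equivalent uniformly convex norm. (2) There exists q ∈ [2,∞) such that for every n ∈ ℕ there exists C = C(n,Y) ∈ (0,∞) such that for every n-dimensional normed space (X,‖·‖_X) and every 1-Lipschitz compactly supported function f:X→Y one has ∫_X ∫_0^∞ inf_{Λ ∈ A(X,Y)} fint_{x+tB_X} ‖f(y)−Λ(y)‖_Y^q / t^{q+1} dy dt dx ≤ C·|supp(f)|. (3) There exist q,C ∈ [2,∞), n₀ ∈ ℕ and an n₀-dimensional normed space (X₀,‖·‖_{X₀}) such that the inequality in (2) holds for every 1-Lipschitz compactly supported function f:X₀→Y. -/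

import Mathlib

open MeasureTheory Metric Set ENNReal

noncomputable section

/-- `N` is a norm on the real vector space `V`. -/
def IsNorm {V : Type*} [AddCommGroup V] [Module ℝ V] (N : V → ℝ) : Prop :=
  (∀ x, N x = 0 → x = 0) ∧ (∀ (a : ℝ) (x : V), N (a • x) = |a| * N x) ∧
    (∀ x y : V, N (x + y) ≤ N x + N y)

/-- The norm `N` is uniformly convex. -/
def UniformlyConvexNorm {V : Type*} [AddCommGroup V] [Module ℝ V] (N : V → ℝ) : Prop :=
  ∀ ε ∈ Set.Ioc (0 : ℝ) 2, ∃ δ ∈ Set.Ioc (0 : ℝ) 1, ∀ x y : V,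
    N x ≤ 1 → N y ≤ 1 → ε ≤ N (x - y) → N (x + y) ≤ 2 * (1 - δ)

/-- `Y` admits an equivalent uniformly convex norm. -/
def AdmitsEquivUniformlyConvexNorm (Y : Type*) [NormedAddCommGroup Y] [NormedSpace ℝ Y] : Prop :=
  ∃ N : Y → ℝ, IsNorm N ∧
    (∃ a b : ℝ, 0 < a ∧ 0 < b ∧ ∀ y : Y, a * ‖y‖ ≤ N y ∧ N y ≤ b * ‖y‖) ∧
    UniformlyConvexNorm N

/-- The Dorronsoro inequality with exponent `q` and constant `C` for mappings from the
`n`-dimensional normed space `X = (ℝⁿ, N)` to `Y`: every `1`-Lipschitz compactly supported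
`f : X → Y` satisfies
`∫_X ∫_0^∞ inf_{Λ affine} ⨍_{x+tB_X} ‖f-Λ‖^q/t^{q+1} dy dt dx ≤ C·|supp f|`. -/
def DorronsoroIneq (q C : ℝ) {n : ℕ} (N : EuclideanSpace ℝ (Fin n) → ℝ)
    (Y : Type*) [NormedAddCommGroup Y] [NormedSpace ℝ Y] : Prop :=
  ∀ f : EuclideanSpace ℝ (Fin n) → Y,
    HasCompactSupport f → (∀ x y, ‖f x - f y‖ ≤ N (x - y)) →
    (∫⁻ x, ∫⁻ t in Set.Ioi (0 : ℝ),
        (⨅ Λ : EuclideanSpace ℝ (Fin n) →ᵃ[ℝ] Y,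
            (∫⁻ y in {y : EuclideanSpace ℝ (Fin n) | N (y - x) ≤ t},
                (‖f y - Λ y‖₊ : ℝ≥0∞) ^ q)
              / volume {y : EuclideanSpace ℝ (Fin n) | N (y - x) ≤ t})
          / ENNReal.ofReal (t ^ (q + 1)))
      ≤ ENNReal.ofReal C * volume (tsupport f)



section NormBasics
variable {V : Type*} [AddCommGroup V] [Module ℝ V] {N : V → ℝ}

lemma IsNorm.zero (h : IsNorm N) : N 0 = 0 := by
  have := h.2.1 0 0
  simpa using this

lemma IsNorm.neg (h : IsNorm N) (x : V) : N (-x) = N x := by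
  have := h.2.1 (-1) x
  simpa using this

lemma IsNorm.nonneg (h : IsNorm N) (x : V) : 0 ≤ N x := by
  have h1 := h.2.2 x (-x)
  rw [h.neg, add_neg_cancel, h.zero] at h1
  linarith

lemma IsNorm.sub_comm (h : IsNorm N) (x y : V) : N (x - y) = N (y - x) := by
  rw [← h.neg, neg_sub]

lemma IsNorm.smul_nonneg (h : IsNorm N) {a : ℝ} (ha : 0 ≤ a) (x : V) : N (a • x) = a * N x := by
  rw [h.2.1, abs_of_nonneg ha]

lemma IsNorm.add_le (h : IsNorm N) (x y : V) : N (x + y) ≤ N x + N y := h.2.2 x y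

lemma IsNorm.sub_le (h : IsNorm N) (x y : V) : N (x - y) ≤ N x + N y := by
  have := h.2.2 x (-y)
  rwa [h.neg, ← sub_eq_add_neg] at this

/-- Midpoint estimate: `2 N x ≤ N (x+v) + N (x-v)`. -/
lemma IsNorm.mid (h : IsNorm N) (x v : V) : 2 * N x ≤ N (x + v) + N (x - v) := by
  have := h.add_le (x + v) (x - v)
  have e : (x + v) + (x - v) = (2 : ℝ) • x := by rw [two_smul]; abel
  rw [e, h.smul_nonneg (by norm_num)] at this
  exact this

lemma IsNorm.mid' (h : IsNorm N) (x v : V) : 2 * N v ≤ N (x + v) + N (x - v) := by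
  have := h.mid v x
  rw [add_comm v x, h.sub_comm v x] at this
  exact this

end NormBasics

/-- `Tr N m k x s`: there is a dyadic martingale of length at most `k`, in the unit ball of `N`,
starting at `x`, whose increments have total `m`-energy `s`. -/
inductive Tr {V : Type*} [AddCommGroup V] [Module ℝ V] (N : V → ℝ) (m : ℕ) : ℕ → V → ℝ → Prop
  | leaf (k : ℕ) (x : V) : N x ≤ 1 → Tr N m k x 0
  | node (k : ℕ) (x v : V) (s₁ s₂ : ℝ) : Tr N m k (x + v) s₁ → Tr N m k (x - v) s₂ →
      Tr N m (k + 1) x ((s₁ + s₂) / 2 + N v ^ m)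

section Trees
variable {V : Type*} [AddCommGroup V] [Module ℝ V] {N : V → ℝ} {m : ℕ}

lemma Tr.mem (hN : IsNorm N) {k : ℕ} {x : V} {s : ℝ} (h : Tr N m k x s) : N x ≤ 1 := by
  induction h with
  | leaf k x hx => exact hx
  | node k x v s₁ s₂ h₁ h₂ i₁ i₂ => linarith [hN.mid x v]

lemma Tr.nonneg (hN : IsNorm N) {k : ℕ} {x : V} {s : ℝ} (h : Tr N m k x s) : 0 ≤ s := by
  induction h with
  | leaf k x hx => exact le_rfl
  | node k x v s₁ s₂ h₁ h₂ i₁ i₂ =>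
    have := pow_nonneg (hN.nonneg v) m
    linarith

lemma Tr.le (hN : IsNorm N) {k : ℕ} {x : V} {s : ℝ} (h : Tr N m k x s) : s ≤ k := by
  induction h with
  | leaf k x hx => positivity
  | node k x v s₁ s₂ h₁ h₂ i₁ i₂ =>
    have := h₁.mem hN
    have := h₂.mem hN
    have h3 := hN.mid' x v
    have := pow_le_one₀ (n := m) (hN.nonneg v) (by linarith)
    push_cast
    linarith

lemma Tr.neg (hN : IsNorm N) {k : ℕ} {x : V} {s : ℝ} (h : Tr N m k x s) : Tr N m k (-x) s := by
  induction h with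
  | leaf k x hx => exact Tr.leaf _ _ (by rwa [hN.neg])
  | node k x v s₁ s₂ h₁ h₂ i₁ i₂ =>
    rw [← hN.neg v]
    refine Tr.node k (-x) (-v) s₁ s₂ ?_ ?_
    · convert i₁ using 1; abel
    · convert i₂ using 1; abel

lemma Tr.succ {k : ℕ} {x : V} {s : ℝ} (h : Tr N m k x s) :
    Tr N m (k + 1) x s := by
  induction h with
  | leaf k x hx => exact Tr.leaf _ _ hx
  | node k x v s₁ s₂ h₁ h₂ i₁ i₂ => exact Tr.node _ _ _ _ _ i₁ i₂

lemma Tr.mono {k l : ℕ} (hkl : k ≤ l) {x : V} {s : ℝ} (h : Tr N m k x s) :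
    Tr N m l x s := by
  induction hkl with
  | refl => exact h
  | step _ ih => exact ih.succ

lemma exists_concave (hN : IsNorm N) {C : ℝ}
    (hC : ∀ k x s, Tr N m k x s → s ≤ C) :
    ∃ F : V → ℝ, (∀ x, N x ≤ 1 → 0 ≤ F x ∧ F x ≤ C) ∧
      (∀ x v, N (x + v) ≤ 1 → N (x - v) ≤ 1 → (F (x + v) + F (x - v)) / 2 + N v ^ m ≤ F x) ∧
      (∀ x, F (-x) = F x) ∧
      (∀ (k : ℕ) x y, N x ≤ 1 / 2 → N y ≤ 1 / 2 → N (x - y) ≤ 1 / 2 ^ (k + 1) →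
        |F x - F y| ≤ C / 2 ^ k) := by
  let A : V → Set ℝ := fun x => {s | ∃ k, Tr N m k x s}
  have bdd : ∀ x, BddAbove (A x) := fun x => ⟨C, by rintro s ⟨k, h⟩; exact hC k x s h⟩
  have ne : ∀ x, N x ≤ 1 → (A x).Nonempty := fun x hx => ⟨0, 0, Tr.leaf _ _ hx⟩
  have b : ∀ x, N x ≤ 1 → 0 ≤ sSup (A x) ∧ sSup (A x) ≤ C := by
    intro x hx
    refine ⟨le_csSup (bdd x) ⟨0, Tr.leaf _ _ hx⟩, csSup_le (ne x hx) ?_⟩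
    rintro s ⟨k, h⟩; exact hC k x s h
  have mid : ∀ x v, N (x + v) ≤ 1 → N (x - v) ≤ 1 →
      (sSup (A (x + v)) + sSup (A (x - v))) / 2 + N v ^ m ≤ sSup (A x) := by
    intro x v h1 h2
    have key : ∀ s₁ ∈ A (x + v), ∀ s₂ ∈ A (x - v), (s₁ + s₂) / 2 + N v ^ m ≤ sSup (A x) := by
      rintro s₁ ⟨k, hk⟩ s₂ ⟨l, hl⟩
      exact le_csSup (bdd x) ⟨max k l + 1,
        Tr.node _ _ _ _ _ (hk.mono (le_max_left _ _)) (hl.mono (le_max_right _ _))⟩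
    have k1 : ∀ s₂ ∈ A (x - v), sSup (A (x + v)) ≤ 2 * (sSup (A x) - N v ^ m) - s₂ := by
      intro s₂ hs
      refine csSup_le (ne _ h1) fun s₁ hs₁ => ?_
      linarith [key s₁ hs₁ s₂ hs]
    have k2 : sSup (A (x - v)) ≤ 2 * (sSup (A x) - N v ^ m) - sSup (A (x + v)) := by
      refine csSup_le (ne _ h2) fun s₂ hs => ?_
      linarith [k1 s₂ hs]
    linarith
  have low : ∀ (k : ℕ) x w, N x ≤ 1 / 2 → N w ≤ 1 / 2 →
      (1 - 1 / 2 ^ k) * sSup (A x) ≤ sSup (A (x + (1 / 2 ^ k : ℝ) • w)) ∧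
        N (x + (1 / 2 ^ k : ℝ) • w) ≤ 1 := by
    intro k x w hx hw
    have hmem : ∀ k : ℕ, N (x + (1 / 2 ^ k : ℝ) • w) ≤ 1 := by
      intro k
      have h1 := hN.add_le x ((1 / 2 ^ k : ℝ) • w)
      rw [hN.smul_nonneg (by positivity)] at h1
      have : (1 / 2 ^ k : ℝ) ≤ 1 := by
        rw [div_le_one (by positivity)]
        exact one_le_pow₀ (by norm_num)
      nlinarith [hN.nonneg w]
    refine ⟨?_, hmem k⟩
    induction k with
    | zero =>
      simp only [pow_zero, div_one, sub_self, zero_mul, one_smul]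
      have := hmem 0
      simp only [pow_zero, div_one, one_smul] at this
      exact (b _ this).1
    | succ k ih =>
      set z := x + (1 / 2 ^ (k + 1) : ℝ) • w
      have e1 : z + (1 / 2 ^ (k + 1) : ℝ) • w = x + (1 / 2 ^ k : ℝ) • w := by
        simp only [z]
        rw [add_assoc, ← add_smul]
        congr 2
        field_simp; ring
      have e2 : z - (1 / 2 ^ (k + 1) : ℝ) • w = x := by simp [z]
      have := mid z ((1 / 2 ^ (k + 1) : ℝ) • w) (by rw [e1]; exact hmem k)
        (by rw [e2]; linarith)
      rw [e1, e2] at this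
      have h3 := pow_nonneg (hN.nonneg ((1 / 2 ^ (k + 1) : ℝ) • w)) m
      have e3 : (1 - 1 / 2 ^ (k + 1) : ℝ) = ((1 - 1 / 2 ^ k) + 1) / 2 := by
        field_simp; ring
      rw [e3]
      linarith
  have half : ∀ (k : ℕ) x y, N x ≤ 1 / 2 → N y ≤ 1 / 2 → N (x - y) ≤ 1 / 2 ^ (k + 1) →
        sSup (A x) - sSup (A y) ≤ C / 2 ^ k := by
    intro k x y hx hy hxy
    have h1 := (low k x ((2 ^ k : ℝ) • (y - x)) hx (by
      rw [hN.smul_nonneg (by positivity), hN.sub_comm]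
      calc (2 ^ k : ℝ) * N (x - y) ≤ 2 ^ k * (1 / 2 ^ (k + 1)) := by gcongr
        _ = 1 / 2 := by field_simp; ring)).1
    rw [smul_smul, one_div_mul_cancel (by positivity), one_smul, add_sub_cancel] at h1
    have h2 := (b x (by linarith)).2
    have : (1 / 2 ^ k : ℝ) * sSup (A x) ≤ (1 / 2 ^ k : ℝ) * C := by gcongr
    have e : C / 2 ^ k = (1 / 2 ^ k : ℝ) * C := by ring
    rw [e]
    linarith
  refine ⟨fun x => sSup (A x), b, mid, ?_, ?_⟩
  · intro x
    have : A (-x) = A x := by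
      ext s
      constructor
      · rintro ⟨k, h⟩
        exact ⟨k, by simpa using h.neg hN⟩
      · rintro ⟨k, h⟩
        exact ⟨k, h.neg hN⟩
    simp only [this]
  · intro k x y hx hy hxy
    rw [abs_sub_le_iff]
    exact ⟨half k x y hx hy hxy, half k y x hy hx (by rwa [hN.sub_comm])⟩

end Trees



section UC
variable {V : Type*} [AddCommGroup V] [Module ℝ V] {N : V → ℝ}

lemma IsNorm.exists_support (hN : IsNorm N) (z : V) :
    ∃ l : V →ₗ[ℝ] ℝ, l z = N z ∧ ∀ x, l x ≤ N x := by
  by_cases hz : z = 0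
  · exact ⟨0, by simp [hz, hN.zero], fun x => by simpa using hN.nonneg x⟩
  obtain ⟨g, hg1, hg2⟩ := exists_extension_of_le_sublinear
    (LinearPMap.mkSpanSingleton (K := ℝ) z (N z) hz) N
    (fun c hc x => hN.smul_nonneg hc.le x) hN.add_le (by
      rintro ⟨x, hx⟩
      obtain ⟨a, rfl⟩ := Submodule.mem_span_singleton.1 hx
      refine (le_of_eq (LinearPMap.mkSpanSingleton'_apply z (N z) _ a hx)).trans ?_
      rw [hN.2.1, smul_eq_mul, RingHom.id_apply]
      exact mul_le_mul_of_nonneg_right (le_abs_self a) (hN.nonneg z))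
  refine ⟨g, ?_, hg2⟩
  have := hg1 ⟨z, Submodule.mem_span_singleton_self z⟩
  simp only at this
  rw [this]
  exact LinearPMap.mkSpanSingleton_apply ℝ ℝ hz (N z)

lemma exists_sq_gain (hN : IsNorm N) (hU : UniformlyConvexNorm N) :
    ∃ η : ℝ, 0 < η ∧ ∀ x z, N x ≤ 1 → N z ≤ 1 → 1 / 2 ≤ N (x - z) →
      N ((1 / 2 : ℝ) • (x + z)) ^ 2 + η ≤ (N x ^ 2 + N z ^ 2) / 2 := by
  obtain ⟨δ, ⟨hδ0, hδ1⟩, hδ⟩ := hU (1 / 2) (by norm_num)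
  refine ⟨(δ / 32) ^ 2 / 4, by positivity, ?_⟩
  intro x z hx hz hxz
  have hm : N ((1 / 2 : ℝ) • (x + z)) = 1 / 2 * N (x + z) := hN.smul_nonneg (by norm_num) _
  rw [hm]
  have h0 := hN.nonneg (x + z)
  have hadd := hN.add_le x z
  have hx0 := hN.nonneg x
  have hz0 := hN.nonneg z
  by_cases hc : δ / 32 ≤ |N x - N z|
  · have h1 : (δ / 32) ^ 2 ≤ (N x - N z) ^ 2 := by
      rw [← sq_abs (N x - N z)]
      gcongr
    nlinarith
  · push Not at hc
    rw [abs_lt] at hc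
    set r := max (N x) (N z) with hr
    have hxr : N x ≤ r := le_max_left _ _
    have hzr : N z ≤ r := le_max_right _ _
    have hr1 : r ≤ 1 := max_le hx hz
    have hr4 : 1 / 4 ≤ r := by linarith [hN.sub_le x z]
    have hr0 : 0 < r := by linarith
    have hu := hδ (r⁻¹ • x) (r⁻¹ • z)
      (by rw [hN.smul_nonneg (by positivity), inv_mul_le_iff₀ hr0]; linarith)
      (by rw [hN.smul_nonneg (by positivity), inv_mul_le_iff₀ hr0]; linarith)
      (by rw [← smul_sub, hN.smul_nonneg (by positivity), le_inv_mul_iff₀ hr0]; nlinarith)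
    rw [← smul_add, hN.smul_nonneg (by positivity), inv_mul_le_iff₀ hr0] at hu
    have h2 : (1 / 2 * N (x + z)) ^ 2 ≤ r ^ 2 - δ / 16 := by
      have h3 : 1 / 2 * N (x + z) ≤ r * (1 - δ) := by linarith
      have h4 : (1 / 2 * N (x + z)) ^ 2 ≤ (r * (1 - δ)) ^ 2 := by gcongr
      have h5 : (r * (1 - δ)) ^ 2 ≤ r ^ 2 * (1 - δ) := by
        rw [mul_pow]
        gcongr
        nlinarith
      have h6 : 1 / 16 * δ ≤ r ^ 2 * δ := by
        gcongr
        nlinarith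
      nlinarith
    have h3 : r ^ 2 - δ / 32 ≤ (N x ^ 2 + N z ^ 2) / 2 := by
      rcases max_choice (N x) (N z) with h | h
      · rw [← hr] at h
        rw [h]
        nlinarith
      · rw [← hr] at h
        rw [h]
        nlinarith
    have h4 : (δ / 32) ^ 2 / 4 ≤ δ / 32 := by nlinarith
    linarith

lemma exists_support_gain (hN : IsNorm N) (hU : UniformlyConvexNorm N) :
    ∃ η : ℝ, 0 < η ∧ ∀ z, N z ≤ 1 → ∃ l : V →ₗ[ℝ] ℝ,
      (∀ x, N z ^ 2 + l (x - z) ≤ N x ^ 2) ∧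
      (∀ x, N x ≤ 1 → 1 / 2 ≤ N (x - z) → N z ^ 2 + l (x - z) + η ≤ N x ^ 2) := by
  obtain ⟨η, hη, h⟩ := exists_sq_gain hN hU
  refine ⟨2 * η, by positivity, ?_⟩
  intro z hz
  obtain ⟨l, hl1, hl2⟩ := hN.exists_support z
  have key : ∀ x, N z ^ 2 + ((2 * N z) • l) (x - z) ≤ N x ^ 2 := by
    intro x
    simp only [LinearMap.smul_apply, map_sub, smul_eq_mul, hl1]
    have := mul_le_mul_of_nonneg_left (hl2 x) (hN.nonneg z)
    nlinarith [sq_nonneg (N x - N z)]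
  refine ⟨(2 * N z) • l, key, ?_⟩
  intro x hx hxz
  have h1 := h x z hx hz hxz
  have h2 := key ((1 / 2 : ℝ) • (x + z))
  have e : (1 / 2 : ℝ) • (x + z) - z = (1 / 2 : ℝ) • (x - z) := by module
  rw [e, map_smul, smul_eq_mul] at h2
  linarith

lemma tree_bound (hN : IsNorm N) (hU : UniformlyConvexNorm N) :
    ∃ m : ℕ, 2 ≤ m ∧ ∃ C : ℝ, 0 < C ∧ ∀ k x s, Tr N m k x s → s ≤ C := by
  obtain ⟨η, hη, hl⟩ := exists_support_gain hN hU
  choose! l hl1 hl2 using hl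
  obtain ⟨m, hm2, hm⟩ : ∃ m : ℕ, 2 ≤ m ∧ (1 / 2 : ℝ) ^ m * (1 + 2 / η) ≤ 1 / 2 := by
    obtain ⟨m, hm⟩ := exists_pow_lt_of_lt_one (x := 1 / 2 / (1 + 2 / η)) (y := (1 / 2 : ℝ))
      (by positivity) (by norm_num)
    refine ⟨m + 2, by omega, ?_⟩
    rw [lt_div_iff₀ (by positivity)] at hm
    have : (1 / 2 : ℝ) ^ (m + 2) ≤ (1 / 2) ^ m :=
      pow_le_pow_of_le_one (by norm_num) (by norm_num) (by omega)
    nlinarith [show 0 < 1 + 2 / η by positivity]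
  refine ⟨m, hm2, 4 / η, by positivity, ?_⟩
  intro n x s hs
  have step : ∀ W : ℝ, 0 ≤ W → (∀ x s, Tr N m n x s → s ≤ W) →
      ∀ x s, Tr N m n x s → s ≤ W / 2 + 2 / η := by
    intro W hW hb
    set A := 2 * (1 + (1 / 2) ^ m * W) / η with hA
    have hA0 : 0 ≤ A := by positivity
    have claim : ∀ k x s, Tr N m k x s → k ≤ n → ∀ z, N z ≤ 1 → N (x - z) ≤ 1 / 2 →
        ∃ s', Tr N m k ((2 : ℝ) • (x - z)) s' ∧
          s ≤ (1 / 2) ^ m * s' + A * (1 - N z ^ 2 - l z (x - z)) := by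
      intro k x s h
      induction h with
      | leaf k x hx =>
        intro hk z hz hxz
        refine ⟨0, Tr.leaf _ _ ?_, ?_⟩
        · rw [hN.smul_nonneg (by norm_num)]; linarith
        · have h1 := hl1 z hz x
          have h2 := pow_le_one₀ (n := 2) (hN.nonneg x) hx
          have : 0 ≤ A * (1 - N z ^ 2 - l z (x - z)) := mul_nonneg hA0 (by linarith)
          linarith
      | node k x v s₁ s₂ h₁ h₂ i₁ i₂ =>
        intro hk z hz hxz
        have hv1 := h₁.mem hN
        have hv2 := h₂.mem hN
        have hlin : l z (x + v - z) + l z (x - v - z) = 2 * l z (x - z) := by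
          simp only [map_sub, map_add]; ring
        by_cases hc : N (x + v - z) ≤ 1 / 2 ∧ N (x - v - z) ≤ 1 / 2
        · obtain ⟨t₁, ht₁, hs₁⟩ := i₁ (by omega) z hz hc.1
          obtain ⟨t₂, ht₂, hs₂⟩ := i₂ (by omega) z hz hc.2
          refine ⟨(t₁ + t₂) / 2 + N ((2 : ℝ) • v) ^ m, Tr.node _ _ _ _ _ ?_ ?_, ?_⟩
          · convert ht₁ using 1; module
          · convert ht₂ using 1; module
          · rw [hN.smul_nonneg (by norm_num)]
            have e : (1 / 2 : ℝ) ^ m * (2 * N v) ^ m = N v ^ m := by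
              rw [← mul_pow]; congr 1; ring
            rw [mul_add, e]
            nlinarith
        · obtain ⟨t₁, ht₁, hs₁⟩ := i₁ (by omega) (x + v) hv1 (by simp [hN.zero])
          obtain ⟨t₂, ht₂, hs₂⟩ := i₂ (by omega) (x - v) hv2 (by simp [hN.zero])
          have hb1 := hb _ _ (ht₁.mono (by omega : k ≤ n))
          have hb2 := hb _ _ (ht₂.mono (by omega : k ≤ n))
          refine ⟨0, Tr.leaf _ _ ?_, ?_⟩
          · rw [hN.smul_nonneg (by norm_num)]; linarith
          · simp only [sub_self, map_zero, sub_zero] at hs₁ hs₂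
            have hv : N v ^ m ≤ 1 := pow_le_one₀ (hN.nonneg v) (by linarith [hN.mid' x v])
            have g1 := hl1 z hz (x + v)
            have g2 := hl1 z hz (x - v)
            have gain : 2 * N z ^ 2 + 2 * l z (x - z) + η ≤ N (x + v) ^ 2 + N (x - v) ^ 2 := by
              rw [not_and_or, not_le, not_le] at hc
              rcases hc with hc | hc
              · have := hl2 z hz _ hv1 hc.le
                linarith
              · have := hl2 z hz _ hv2 hc.le
                linarith
            have hAη : A * η = 2 * (1 + (1 / 2) ^ m * W) := by
              rw [hA]; field_simp
            have g3 := mul_le_mul_of_nonneg_left gain hA0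
            have p1 : (1 / 2 : ℝ) ^ m * t₁ ≤ (1 / 2) ^ m * W := by gcongr
            have p2 : (1 / 2 : ℝ) ^ m * t₂ ≤ (1 / 2) ^ m * W := by gcongr
            nlinarith
    intro x s hs
    obtain ⟨s', h1, h2⟩ := claim n x s hs le_rfl x (hs.mem hN) (by simp [hN.zero])
    simp only [sub_self, map_zero, sub_zero] at h2
    have h3 := hb _ _ h1
    have p1 : (1 / 2 : ℝ) ^ m * s' ≤ (1 / 2) ^ m * W := by gcongr
    have p2 : A * (1 - N x ^ 2) ≤ A * 1 := by
      gcongr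
      linarith [sq_nonneg (N x)]
    have e : (1 / 2) ^ m * W + A * 1 = ((1 / 2) ^ m * (1 + 2 / η)) * W + 2 / η := by
      rw [hA]; field_simp; ring
    have p3 := mul_le_mul_of_nonneg_right hm hW
    linarith
  set S : Set ℝ := {s | ∃ x, Tr N m n x s}
  have hbdd : BddAbove S := ⟨n, by rintro s ⟨x, h⟩; exact h.le hN⟩
  have hsS : s ≤ sSup S := le_csSup hbdd ⟨x, hs⟩
  have h0 : 0 ≤ sSup S := (hs.nonneg hN).trans hsS
  have : sSup S ≤ sSup S / 2 + 2 / η := by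
    refine csSup_le ⟨s, x, hs⟩ ?_
    rintro s ⟨x, h⟩
    exact step _ h0 (fun x s h => le_csSup hbdd ⟨x, h⟩) x s h
  have e : 4 / η = 2 * (2 / η) := by ring
  rw [e]
  linarith

end UC



lemma isNorm_norm (Y : Type*) [NormedAddCommGroup Y] [NormedSpace ℝ Y] :
    IsNorm (fun y : Y => ‖y‖) :=
  ⟨fun x h => norm_eq_zero.1 h, fun a x => by simp [norm_smul], norm_add_le⟩

lemma convex_of_midpoint_closed {Y : Type*} [NormedAddCommGroup Y] [NormedSpace ℝ Y] {K : Set Y}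
    (hK : IsClosed K) (hm : ∀ x ∈ K, ∀ y ∈ K, (1 / 2 : ℝ) • (x + y) ∈ K) : Convex ℝ K := by
  rw [convex_iff_forall_pos]
  intro x hx y hy a b ha hb hab
  have hb1 : b ≤ 1 := by linarith
  obtain rfl : a = 1 - b := by linarith
  set g : ℝ → Y := fun c => (1 - c) • x + c • y with hg
  have hcont : Continuous g := by fun_prop
  have key : ∀ k : ℕ, ∃ c d : ℝ, c ≤ b ∧ b ≤ d ∧ d - c = (1 / 2) ^ k ∧ g c ∈ K ∧ g d ∈ K := by
    intro k
    induction k with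
    | zero => exact ⟨0, 1, hb.le, hb1, by norm_num, by simpa [hg] using hx, by simpa [hg] using hy⟩
    | succ k ih =>
      obtain ⟨c, d, h1, h2, h3, h4, h5⟩ := ih
      have hmid : g ((c + d) / 2) ∈ K := by
        have := hm _ h4 _ h5
        convert this using 1
        simp only [hg]
        module
      rcases le_total b ((c + d) / 2) with h | h
      · exact ⟨c, (c + d) / 2, h1, h, by rw [pow_succ, ← h3]; ring, h4, hmid⟩
      · exact ⟨(c + d) / 2, d, h, h2, by rw [pow_succ, ← h3]; ring, hmid, h5⟩
  choose c d h1 h2 h3 h4 h5 using key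
  have hlim : Filter.Tendsto c Filter.atTop (nhds b) := by
    have h0 : Filter.Tendsto (fun k : ℕ => b - (1 / 2 : ℝ) ^ k) Filter.atTop (nhds b) := by
      have := tendsto_pow_atTop_nhds_zero_of_lt_one (r := (1 / 2 : ℝ)) (by norm_num) (by norm_num)
      simpa using this.const_sub b
    exact tendsto_of_tendsto_of_tendsto_of_le_of_le h0 tendsto_const_nhds
      (fun k => by have := h3 k; have := h2 k; simp only; linarith) h1
  exact hK.mem_of_tendsto ((hcont.tendsto b).comp hlim) (Filter.Eventually.of_forall h4)

lemma ucnorm_of_bound (Y : Type*) [NormedAddCommGroup Y] [NormedSpace ℝ Y] (m : ℕ) (C : ℝ)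
    (hC : ∀ k x s, Tr (fun y : Y => ‖y‖) m k x s → s ≤ C) :
    AdmitsEquivUniformlyConvexNorm Y := by
  obtain ⟨F, hF1, hF2, hF3, hF4⟩ := exists_concave (isNorm_norm Y) hC
  have hC0 : 0 ≤ C := hC 0 0 0 (Tr.leaf _ _ (by simp))
  set σ : ℝ := 1 / (8 * (C + 1)) with hσ
  have hσ0 : 0 < σ := by positivity
  have hσC : σ * C ≤ 1 / 8 := by
    rw [hσ, one_div_mul_eq_div, div_le_div_iff₀ (by positivity) (by norm_num)]
    linarith
  have hcF : ContinuousOn F (closedBall 0 (1 / 2)) := by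
    rw [Metric.continuousOn_iff]
    intro x hx ε hε
    obtain ⟨k, hk⟩ := exists_pow_lt_of_lt_one (x := ε / (C + 1)) (y := (1 / 2 : ℝ))
      (by positivity) (by norm_num)
    refine ⟨1 / 2 ^ (k + 1), by positivity, ?_⟩
    intro y hy hyx
    rw [Real.dist_eq]
    have := hF4 k y x (by simpa using hy) (by simpa using hx)
      (by rw [← dist_eq_norm]; exact hyx.le)
    refine this.trans_lt ?_
    rw [lt_div_iff₀ (by positivity)] at hk
    have e : C / 2 ^ k = (1 / 2) ^ k * C := by rw [one_div, inv_pow]; ring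
    rw [e]
    have : (0 : ℝ) < (1 / 2) ^ k := by positivity
    linarith
  set H : Y → ℝ := fun x => ‖x‖ + σ * (F 0 - F x) with hH
  have hcH : ContinuousOn H (closedBall 0 (1 / 2)) := by
    apply ContinuousOn.add continuous_norm.continuousOn
    exact continuousOn_const.mul (continuousOn_const.sub hcF)
  have hG0 : ∀ x, ‖x‖ ≤ 1 → 0 ≤ F 0 - F x := by
    intro x hx
    have := hF2 0 x (by simpa using hx) (by simpa using hx)
    rw [zero_add, zero_sub, hF3] at this
    have h2 : 0 ≤ ‖x‖ ^ m := by positivity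
    linarith
  have hG1 : ∀ x, ‖x‖ ≤ 1 → σ * (F 0 - F x) ≤ 1 / 8 := by
    intro x hx
    have h1 := (hF1 x hx).1
    have h2 := (hF1 0 (by simp)).2
    nlinarith
  set K : Set Y := closedBall 0 (1 / 2) ∩ H ⁻¹' Iic (1 / 4) with hK
  have hKc : IsClosed K := hcH.preimage_isClosed_of_isClosed isClosed_closedBall isClosed_Iic
  have hK4 : ∀ x ∈ K, ‖x‖ ≤ 1 / 4 := by
    rintro x ⟨h1, h2⟩
    have h1' : ‖x‖ ≤ 1 / 2 := by simpa using h1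
    have h3 : H x ≤ 1 / 4 := h2
    have := mul_nonneg hσ0.le (hG0 x (by linarith))
    simp only [hH] at h3
    linarith
  have hK8 : closedBall (0 : Y) (1 / 8) ⊆ K := by
    intro x hx
    have h1 : ‖x‖ ≤ 1 / 8 := by simpa using hx
    refine ⟨by simp; linarith, ?_⟩
    have := hG1 x (by linarith)
    simp only [mem_preimage, mem_Iic, hH]
    linarith
  have hmid : ∀ x ∈ K, ∀ y ∈ K, ‖(1 / 2 : ℝ) • (x + y)‖ ≤ 1 / 4 ∧
      H ((1 / 2 : ℝ) • (x + y)) + σ * ‖(1 / 2 : ℝ) • (x - y)‖ ^ m ≤ 1 / 4 := by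
    intro x hx y hy
    have hx4 := hK4 x hx
    have hy4 := hK4 y hy
    have hxH : H x ≤ 1 / 4 := hx.2
    have hyH : H y ≤ 1 / 4 := hy.2
    have hn : ‖(1 / 2 : ℝ) • (x + y)‖ ≤ (‖x‖ + ‖y‖) / 2 := by
      rw [norm_smul]
      have := norm_add_le x y
      norm_num
      linarith
    refine ⟨by linarith, ?_⟩
    have e1 : (1 / 2 : ℝ) • (x + y) + (1 / 2 : ℝ) • (x - y) = x := by module
    have e2 : (1 / 2 : ℝ) • (x + y) - (1 / 2 : ℝ) • (x - y) = y := by module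
    have := hF2 ((1 / 2 : ℝ) • (x + y)) ((1 / 2 : ℝ) • (x - y)) (by rw [e1]; linarith)
      (by rw [e2]; linarith)
    rw [e1, e2] at this
    have := mul_le_mul_of_nonneg_left this hσ0.le
    simp only [hH] at hxH hyH ⊢
    nlinarith
  have hKconv : Convex ℝ K := by
    apply convex_of_midpoint_closed hKc
    intro x hx y hy
    obtain ⟨h1, h2⟩ := hmid x hx y hy
    refine ⟨by simpa using (by linarith : ‖(1 / 2 : ℝ) • (x + y)‖ ≤ 1 / 2), ?_⟩
    have : 0 ≤ σ * ‖(1 / 2 : ℝ) • (x - y)‖ ^ m := by positivity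
    simp only [mem_preimage, mem_Iic]
    linarith
  have hKsymm : ∀ x ∈ K, -x ∈ K := by
    rintro x ⟨h1, h2⟩
    refine ⟨by simpa using h1, ?_⟩
    simp only [mem_preimage, mem_Iic, hH, norm_neg, hF3] at h2 ⊢
    exact h2
  have hKn : K ∈ nhds (0 : Y) :=
    Filter.mem_of_superset (closedBall_mem_nhds 0 (by norm_num)) hK8
  have hKabs : Absorbent ℝ K := absorbent_nhds_zero hKn
  have hg8 : ∀ x, gauge K x ≤ 8 * ‖x‖ := by
    intro x
    have := mul_gauge_le_norm (x := x) (ball_subset_closedBall.trans hK8)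
    linarith
  have hg4 : ∀ x, 4 * ‖x‖ ≤ gauge K x := by
    intro x
    have := le_gauge_of_subset_closedBall (r := 1 / 4) (x := x) hKabs (by norm_num)
      (fun y hy => by simpa using hK4 y hy)
    linarith
  refine ⟨gauge K, ⟨?_, ?_, gauge_add_le hKconv hKabs⟩, ⟨4, 8, by norm_num, by norm_num,
    fun y => ⟨hg4 y, hg8 y⟩⟩, ?_⟩
  · intro x hx
    have := hg4 x
    rw [hx] at this
    exact norm_le_zero_iff.1 (by linarith)
  · intro a x
    rcases le_total 0 a with h | h
    · rw [gauge_smul_of_nonneg h, abs_of_nonneg h, smul_eq_mul]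
    · rw [← gauge_neg hKsymm, ← neg_smul, gauge_smul_of_nonneg (by linarith), abs_of_nonpos h,
        smul_eq_mul]
  · rintro ε ⟨hε0, hε2⟩
    set ρ : ℝ := σ * (ε / 16) ^ m with hρ
    have hρ0 : 0 < ρ := by positivity
    obtain ⟨k, hk⟩ := exists_pow_lt_of_lt_one (x := ρ / (C + 1 + 1)) (y := (1 / 2 : ℝ))
      (by positivity) (by norm_num)
    rw [lt_div_iff₀ (by positivity)] at hk
    set δ : ℝ := (1 / 2) ^ k with hδ
    have hδ0 : 0 < δ := by positivity
    have hδ1 : δ ≤ 1 := pow_le_one₀ (by norm_num) (by norm_num)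
    refine ⟨δ / (1 + δ), ⟨by positivity, by rw [div_le_one (by positivity)]; linarith⟩, ?_⟩
    intro x y hx hy hxy
    have hxK : x ∈ K := by
      have := (gauge_le_one_iff_mem_closure hKconv hKn).1 hx
      rwa [hKc.closure_eq] at this
    have hyK : y ∈ K := by
      have := (gauge_le_one_iff_mem_closure hKconv hKn).1 hy
      rwa [hKc.closure_eq] at this
    obtain ⟨h1, h2⟩ := hmid x hxK y hyK
    set z := (1 / 2 : ℝ) • (x + y) with hz
    have hv : ε / 16 ≤ ‖(1 / 2 : ℝ) • (x - y)‖ := by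
      rw [norm_smul]
      have := hg8 (x - y)
      norm_num
      linarith
    have h3 : ρ ≤ σ * ‖(1 / 2 : ℝ) • (x - y)‖ ^ m := by
      rw [hρ]; gcongr
    have hn : ‖(1 + δ) • z‖ = (1 + δ) * ‖z‖ := by
      rw [norm_smul, Real.norm_of_nonneg (by positivity)]
    have hn2 : ‖(1 + δ) • z‖ ≤ 1 / 2 := by
      rw [hn]; nlinarith [norm_nonneg z]
    have hd : ‖z - (1 + δ) • z‖ ≤ 1 / 2 ^ (k + 1) := by
      have e : z - (1 + δ) • z = (-δ) • z := by module
      rw [e, norm_smul, norm_neg, Real.norm_of_nonneg hδ0.le]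
      have e2 : (1 : ℝ) / 2 ^ (k + 1) = δ / 2 := by
        rw [hδ, pow_succ, one_div, one_div, inv_pow]; field_simp
      rw [e2]; nlinarith
    have h4 := hF4 k z ((1 + δ) • z) (by linarith) hn2 hd
    have e3 : C / 2 ^ k = δ * C := by rw [hδ, one_div, inv_pow]; ring
    rw [e3] at h4
    have h5 := (abs_le.1 h4).2
    have hmem : (1 + δ) • z ∈ K := by
      refine ⟨by simpa using hn2, ?_⟩
      simp only [mem_preimage, mem_Iic, hH] at h2 ⊢
      rw [hn]
      have hσ1 : σ ≤ 1 := by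
        rw [hσ, div_le_one (by positivity)]; linarith
      have : σ * (F 0 - F ((1 + δ) • z)) ≤ σ * (F 0 - F z) + δ * C := by
        have : σ * (F z - F ((1 + δ) • z)) ≤ σ * (δ * C) := by gcongr
        have : σ * (δ * C) ≤ 1 * (δ * C) := by gcongr
        linarith
      nlinarith [norm_nonneg z]
    have h6 : gauge K ((1 + δ) • z) ≤ 1 := gauge_le_one_of_mem hmem
    rw [gauge_smul_of_nonneg (by positivity), smul_eq_mul] at h6
    have h7 : gauge K (x + y) = 2 * gauge K z := by
      have e : x + y = (2 : ℝ) • z := by rw [hz]; module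
      rw [e, gauge_smul_of_nonneg (by norm_num), smul_eq_mul]
    rw [h7]
    have h8 : gauge K z ≤ 1 / (1 + δ) := by
      rw [le_div_iff₀ (by positivity)]; linarith
    have e9 : 1 - δ / (1 + δ) = 1 / (1 + δ) := by field_simp; ring
    rw [e9]
    linarith



section FinDim
variable {n : ℕ} {N : EuclideanSpace ℝ (Fin n) → ℝ}

lemma IsNorm.sum_le {V : Type*} [AddCommGroup V] [Module ℝ V] {N : V → ℝ} (hN : IsNorm N)
    {ι : Type*} (s : Finset ι) (v : ι → V) : N (∑ i ∈ s, v i) ≤ ∑ i ∈ s, N (v i) := by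
  classical
  induction s using Finset.induction_on with
  | empty => simp [hN.zero]
  | insert a s ha ih =>
    rw [Finset.sum_insert ha, Finset.sum_insert ha]
    exact (hN.add_le _ _).trans (by linarith)

lemma IsNorm.le_coord (hN : IsNorm N) (x : EuclideanSpace ℝ (Fin n)) :
    N x ≤ ∑ i, |x i| * N (EuclideanSpace.single i 1) := by
  have e : x = ∑ i, x i • EuclideanSpace.single i (1 : ℝ) := by
    ext j
    simp [Finset.sum_apply, Pi.single_apply]
  conv_lhs => rw [e]
  refine (hN.sum_le _ _).trans (le_of_eq ?_)
  simp only [hN.2.1]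

lemma IsNorm.exists_le_norm (hN : IsNorm N) : ∃ c : ℝ, 0 < c ∧ ∀ x, N x ≤ c * ‖x‖ := by
  refine ⟨∑ i, N (EuclideanSpace.single i 1) + 1, ?_, ?_⟩
  · have := Finset.sum_nonneg (s := Finset.univ)
      (fun i _ => hN.nonneg (EuclideanSpace.single (i : Fin n) (1 : ℝ)))
    linarith
  · intro x
    refine (hN.le_coord x).trans ?_
    rw [add_mul, Finset.sum_mul, one_mul]
    have : ∑ i, |x i| * N (EuclideanSpace.single i 1) ≤
        ∑ i, N (EuclideanSpace.single i 1) * ‖x‖ := by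
      refine Finset.sum_le_sum fun i _ => ?_
      rw [mul_comm]
      refine mul_le_mul_of_nonneg_left ?_ (hN.nonneg _)
      exact PiLp.norm_apply_le x i
    linarith [norm_nonneg x]

lemma IsNorm.abs_sub_le {V : Type*} [AddCommGroup V] [Module ℝ V] {N : V → ℝ} (hN : IsNorm N)
    (x y : V) : |N x - N y| ≤ N (x - y) := by
  rw [abs_sub_le_iff]
  constructor
  · have := hN.add_le (x - y) y
    rw [sub_add_cancel] at this; linarith
  · have := hN.add_le (y - x) x
    rw [sub_add_cancel, hN.sub_comm y x] at this; linarith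

lemma IsNorm.continuous (hN : IsNorm N) : Continuous N := by
  obtain ⟨c, hc, h⟩ := hN.exists_le_norm
  have : LipschitzWith ⟨c, hc.le⟩ N := by
    refine LipschitzWith.of_dist_le_mul fun x y => ?_
    rw [Real.dist_eq, dist_eq_norm]
    exact (hN.abs_sub_le x y).trans (h _)
  exact this.continuous

lemma IsNorm.exists_norm_le (hN : IsNorm N) : ∃ c : ℝ, 0 < c ∧ ∀ x, c * ‖x‖ ≤ N x := by
  by_cases hne : (sphere (0 : EuclideanSpace ℝ (Fin n)) 1).Nonempty
  · obtain ⟨z, hz, hmin⟩ := (isCompact_sphere (0 : EuclideanSpace ℝ (Fin n)) 1).exists_isMinOn hne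
      hN.continuous.continuousOn
    have hz1 : ‖z‖ = 1 := by simpa using hz
    have hz0 : N z ≠ 0 := fun h => by
      rw [hN.1 z h, norm_zero] at hz1
      norm_num at hz1
    refine ⟨N z, lt_of_le_of_ne (hN.nonneg z) hz0.symm, ?_⟩
    intro x
    by_cases hx : x = 0
    · simp [hx, hN.zero]
    have hx' : 0 < ‖x‖ := norm_pos_iff.2 hx
    have h1 : N z ≤ N (‖x‖⁻¹ • x) := hmin (by simp [norm_smul, hx'.ne'])
    rw [hN.smul_nonneg (by positivity), le_inv_mul_iff₀ hx'] at h1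
    linarith
  · refine ⟨1, one_pos, ?_⟩
    intro x
    by_cases hx : x = 0
    · simp [hx, hN.zero]
    exfalso
    have hx' : 0 < ‖x‖ := norm_pos_iff.2 hx
    exact hne ⟨‖x‖⁻¹ • x, by simp [norm_smul, hx'.ne']⟩

lemma IsNorm.isCompact_le (hN : IsNorm N) (r : ℝ) : IsCompact {x | N x ≤ r} := by
  obtain ⟨c, hc, h⟩ := hN.exists_norm_le
  refine (isCompact_closedBall (0 : EuclideanSpace ℝ (Fin n)) (r / c)).of_isClosed_subset
    (isClosed_le hN.continuous continuous_const) ?_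
  intro x hx
  simp only [mem_closedBall, dist_zero_right]
  rw [le_div_iff₀ hc]
  have : N x ≤ r := hx
  linarith [h x]

lemma IsNorm.measurableSet_ball (hN : IsNorm N) (p : EuclideanSpace ℝ (Fin n)) (r : ℝ) :
    MeasurableSet {y | N (y - p) ≤ r} :=
  (isClosed_le (hN.continuous.comp (continuous_id.sub continuous_const))
    continuous_const).measurableSet

lemma IsNorm.volume_one_lt_top (hN : IsNorm N) : volume {y | N y ≤ 1} < ∞ :=
  (hN.isCompact_le 1).measure_lt_top

lemma IsNorm.volume_one_pos (hN : IsNorm N) : 0 < volume {y | N y ≤ 1} := by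
  obtain ⟨c, hc, h⟩ := hN.exists_le_norm
  refine lt_of_lt_of_le (measure_ball_pos volume (0 : EuclideanSpace ℝ (Fin n))
    (r := 1 / c) (by positivity)) (measure_mono ?_)
  intro x hx
  have hx' : ‖x‖ < 1 / c := by simpa using hx
  rw [lt_div_iff₀ hc] at hx'
  simp only [mem_ofPred_eq]
  linarith [h x]

open Pointwise in
lemma IsNorm.volume_ball (hN : IsNorm N) (p : EuclideanSpace ℝ (Fin n)) {r : ℝ} (hr : 0 < r) :
    volume {y | N (y - p) ≤ r} = ENNReal.ofReal (r ^ n) * volume {y | N y ≤ 1} := by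
  have e : {y | N (y - p) ≤ r} = (fun y => y + (-p)) ⁻¹' (r • {y | N y ≤ 1}) := by
    ext y
    simp only [mem_ofPred_eq, mem_preimage]
    rw [mem_smul_set_iff_inv_smul_mem₀ hr.ne', mem_ofPred_eq, hN.smul_nonneg (by positivity),
      inv_mul_le_iff₀ hr, mul_one, ← sub_eq_add_neg]
  rw [e, measure_preimage_add_right, Measure.addHaar_smul, finrank_euclideanSpace_fin,
    abs_of_nonneg (by positivity)]

end FinDim



section RelSec
variable {Y : Type*} [NormedAddCommGroup Y] [NormedSpace ℝ Y]

/-- `Rr g m a h s`: `s` is an `m`-energy sum of second differences of `g` over a finite dyadic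
tree of subintervals of `[a,a+h]`. -/
inductive Rr (g : ℝ → Y) (m : ℕ) : ℝ → ℝ → ℝ → Prop
  | leaf (a h : ℝ) : Rr g m a h 0
  | node (a h s₁ s₂ : ℝ) : Rr g m a (h / 2) s₁ → Rr g m (a + h / 2) (h / 2) s₂ →
      Rr g m a h ((s₁ + s₂) / 2 + (‖g (a + h) + g a - (2 : ℝ) • g (a + h / 2)‖ / h) ^ m)

lemma Rr.nonneg {g : ℝ → Y} {m : ℕ} {a h s : ℝ} (H : Rr g m a h s) (hh : 0 < h) : 0 ≤ s := by
  induction H with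
  | leaf a h => exact le_rfl
  | node a h s₁ s₂ h₁ h₂ i₁ i₂ =>
    have := i₁ (by positivity)
    have := i₂ (by positivity)
    positivity

lemma Rr.congr {g g' : ℝ → Y} {m : ℕ} {a h s : ℝ} (H : Rr g m a h s) (hh : 0 < h)
    (hg : ∀ t ∈ Icc a (a + h), g t = g' t) : Rr g' m a h s := by
  induction H with
  | leaf a h => exact Rr.leaf _ _
  | node a h s₁ s₂ h₁ h₂ i₁ i₂ =>
    rw [hg (a + h) ⟨by linarith, by linarith⟩, hg a ⟨by linarith, by linarith⟩,
      hg (a + h / 2) ⟨by linarith, by linarith⟩]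
    refine Rr.node _ _ _ _ (i₁ (by positivity) ?_) (i₂ (by positivity) ?_)
    · rintro t ⟨h1, h2⟩
      exact hg t ⟨h1, by linarith⟩
    · rintro t ⟨h1, h2⟩
      exact hg t ⟨by linarith, by linarith⟩

lemma exists_path {m k : ℕ} {x : Y} {s : ℝ} (H : Tr (fun y : Y => ‖y‖) m k x s) :
    ∀ (a h : ℝ) (y₀ : Y), 0 < h → ∃ g : ℝ → Y, (∀ s t, ‖g s - g t‖ ≤ |s - t|) ∧ g a = y₀ ∧
      g (a + h) = y₀ + h • x ∧ Rr g m a h s := by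
  induction H with
  | leaf k x hx =>
    intro a h y₀ hh
    refine ⟨fun t => y₀ + (t - a) • x, ?_, by simp, by simp, Rr.leaf _ _⟩
    intro s t
    have e : y₀ + (s - a) • x - (y₀ + (t - a) • x) = (s - t) • x := by module
    rw [e, norm_smul, Real.norm_eq_abs]
    have : ‖x‖ ≤ 1 := hx
    nlinarith [abs_nonneg (s - t)]
  | node k x v s₁ s₂ h₁ h₂ i₁ i₂ =>
    intro a h y₀ hh
    obtain ⟨g₁, l₁, b₁, e₁, r₁⟩ := i₁ a (h / 2) y₀ (by positivity)
    obtain ⟨g₂, l₂, b₂, e₂, r₂⟩ := i₂ (a + h / 2) (h / 2) (y₀ + (h / 2) • (x + v)) (by positivity)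
    set c := a + h / 2 with hc
    have ec : a + h = c + h / 2 := by rw [hc]; ring
    have hjoin : g₁ c = g₂ c := by rw [e₁, b₂]
    let g : ℝ → Y := fun t => if t ≤ c then g₁ t else g₂ t
    have g1 : ∀ t, t ≤ c → g t = g₁ t := fun t ht => if_pos ht
    have g2 : ∀ t, c ≤ t → g t = g₂ t := by
      intro t ht
      rcases ht.eq_or_lt with h | h
      · rw [← h, g1 c le_rfl, hjoin]
      · exact if_neg (not_le.2 h)
    have lip : ∀ s t, s ≤ t → ‖g s - g t‖ ≤ t - s := by
      intro s t hst
      rcases le_total t c with h | h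
      · rw [g1 s (hst.trans h), g1 t h]
        have := l₁ s t
        rwa [abs_sub_comm, abs_of_nonneg (by linarith)] at this
      · rcases le_total s c with h' | h'
        · rw [g1 s h', g2 t h]
          have p1 := l₁ s c
          have p2 := l₂ c t
          rw [abs_sub_comm, abs_of_nonneg (by linarith)] at p1 p2
          have e : g₁ s - g₂ t = (g₁ s - g₁ c) + (g₂ c - g₂ t) := by rw [hjoin]; abel
          rw [e]
          exact (norm_add_le _ _).trans (by linarith)
        · rw [g2 s h', g2 t h]
          have := l₂ s t
          rwa [abs_sub_comm, abs_of_nonneg (by linarith)] at this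
    have ga : g a = y₀ := by rw [g1 a (by rw [hc]; linarith), b₁]
    have gc : g c = y₀ + (h / 2) • (x + v) := by rw [g1 c le_rfl, e₁]
    have gb : g (a + h) = y₀ + h • x := by
      rw [ec, g2 _ (by linarith), e₂]
      module
    refine ⟨g, ?_, ga, gb, ?_⟩
    · intro s t
      rcases le_total s t with h | h
      · rw [abs_sub_comm, abs_of_nonneg (by linarith)]; exact lip s t h
      · rw [norm_sub_rev, abs_of_nonneg (by linarith)]; exact lip t s h
    · have hv : ‖v‖ = ‖g (a + h) + g a - (2 : ℝ) • g (a + h / 2)‖ / h := by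
        rw [← hc, ga, gc, gb]
        have e : y₀ + h • x + y₀ - (2 : ℝ) • (y₀ + (h / 2) • (x + v)) = (-h) • v := by module
        rw [e, norm_smul, norm_neg, Real.norm_of_nonneg hh.le]
        field_simp
      simp only [hv]
      refine Rr.node _ _ _ _ (r₁.congr (by positivity) ?_) (r₂.congr (by positivity) ?_)
      · rintro t ⟨h1, h2⟩
        exact (g1 t h2).symm
      · rintro t ⟨h1, h2⟩
        exact (g2 t h1).symm

lemma exists_path_bdd {m k : ℕ} {x : Y} {s : ℝ} (H : Tr (fun y : Y => ‖y‖) m k x s) :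
    ∃ g : ℝ → Y, (∀ s t, ‖g s - g t‖ ≤ |s - t|) ∧ (∀ t, ‖g t‖ ≤ 1) ∧ Rr g m 0 1 s := by
  obtain ⟨g, h1, h2, h3, h4⟩ := exists_path H 0 1 0 one_pos
  refine ⟨fun t => g (max 0 (min t 1)), ?_, ?_, h4.congr one_pos ?_⟩
  · intro s t
    refine (h1 _ _).trans ?_
    refine (abs_max_sub_max_le_max _ _ _ _).trans ?_
    rw [sub_self, abs_zero]
    refine max_le (abs_nonneg _) ((abs_min_sub_min_le_max _ _ _ _).trans ?_)
    rw [sub_self, abs_zero]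
    exact max_le le_rfl (abs_nonneg _)
  · intro t
    have := h1 (max 0 (min t 1)) 0
    rw [h2, sub_zero, sub_zero, abs_of_nonneg (le_max_left _ _)] at this
    exact this.trans (max_le zero_le_one (min_le_right _ _))
  · rintro t ⟨ha, hb⟩
    rw [zero_add] at hb
    simp only [min_eq_left hb, max_eq_right ha]

end RelSec



section SlabSec
variable {n : ℕ}

/-- Slabs in Euclidean space. -/
def slab (c : ℝ) (i₀ : Fin n) (a h : ℝ) : Set (EuclideanSpace ℝ (Fin n)) :=
  {x | ∀ i, x i ∈ Ico (Function.update (fun _ => (0 : ℝ)) i₀ (a / c) i)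
    (Function.update (fun _ => (1 : ℝ)) i₀ ((a + h) / c) i)}

lemma slab_eq (c : ℝ) (i₀ : Fin n) (a h : ℝ) :
    slab c i₀ a h = (WithLp.ofLp : EuclideanSpace ℝ (Fin n) → (Fin n → ℝ)) ⁻¹'
      (Set.pi univ fun i => Ico (Function.update (fun _ => (0 : ℝ)) i₀ (a / c) i)
    (Function.update (fun _ => (1 : ℝ)) i₀ ((a + h) / c) i)) := by
  ext x
  simp [slab]

lemma measurableSet_slab (c : ℝ) (i₀ : Fin n) (a h : ℝ) : MeasurableSet (slab c i₀ a h) := by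
  rw [slab_eq]
  exact (PiLp.volume_preserving_ofLp (Fin n)).measurable
    (MeasurableSet.univ_pi fun i => measurableSet_Ico)

lemma volume_slab {c : ℝ} (i₀ : Fin n) (a h : ℝ) :
    volume (slab c i₀ a h) = ENNReal.ofReal (h / c) := by
  rw [slab_eq, (PiLp.volume_preserving_ofLp (Fin n)).measure_preimage
    (MeasurableSet.univ_pi fun i => measurableSet_Ico).nullMeasurableSet, Real.volume_pi_Ico]
  rw [Finset.prod_eq_single i₀]
  · simp only [Function.update_self]
    congr 1
    ring
  · intro b _ hb
    simp [Function.update_of_ne hb]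
  · simp

lemma mem_slab {c : ℝ} (hc : 0 < c) (i₀ : Fin n) (a h : ℝ) (x : EuclideanSpace ℝ (Fin n)) :
    x ∈ slab c i₀ a h ↔ (a ≤ c * x i₀ ∧ c * x i₀ < a + h) ∧ ∀ i, i ≠ i₀ → x i ∈ Ico (0 : ℝ) 1 := by
  unfold slab
  constructor
  · intro hx
    refine ⟨?_, ?_⟩
    · have := hx i₀
      simp only [Function.update_self, mem_Ico] at this
      rw [div_le_iff₀ hc, lt_div_iff₀ hc] at this
      constructor <;> nlinarith [this.1, this.2]
    · intro i hi
      have := hx i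
      simpa only [Function.update_of_ne hi] using this
  · rintro ⟨h1, h2⟩ i
    by_cases hi : i = i₀
    · subst hi
      simp only [Function.update_self, mem_Ico]
      rw [div_le_iff₀ hc, lt_div_iff₀ hc]
      constructor <;> nlinarith [h1.1, h1.2]
    · simpa only [Function.update_of_ne hi] using h2 i hi

lemma slab_split {c : ℝ} (hc : 0 < c) (i₀ : Fin n) (a h : ℝ) (hh : 0 < h) :
    slab c i₀ a h = slab c i₀ a (h / 2) ∪ slab c i₀ (a + h / 2) (h / 2) := by
  ext x
  rw [mem_union, mem_slab hc, mem_slab hc, mem_slab hc]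
  constructor
  · rintro ⟨⟨h1, h2⟩, h3⟩
    rcases lt_or_ge (c * x i₀) (a + h / 2) with h | h
    · exact Or.inl ⟨⟨h1, h⟩, h3⟩
    · exact Or.inr ⟨⟨h, by linarith⟩, h3⟩
  · rintro (⟨⟨h1, h2⟩, h3⟩ | ⟨⟨h1, h2⟩, h3⟩)
    · exact ⟨⟨h1, by linarith⟩, h3⟩
    · exact ⟨⟨by linarith, by linarith⟩, h3⟩

lemma slab_disj {c : ℝ} (hc : 0 < c) (i₀ : Fin n) (a h : ℝ) :
    Disjoint (slab c i₀ a (h / 2)) (slab c i₀ (a + h / 2) (h / 2)) := by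
  rw [Set.disjoint_left]
  intro x h1 h2
  rw [mem_slab hc] at h1 h2
  linarith [h1.1.2, h2.1.1]

variable {Y : Type*} [NormedAddCommGroup Y] [NormedSpace ℝ Y]

lemma tree_lower {g : ℝ → Y} {m : ℕ} {c c' R : ℝ} (hc : 0 < c) (hc' : 0 < c') (hR : 0 < R)
    (i₀ : Fin n) (Φ : EuclideanSpace ℝ (Fin n) → ℝ → ℝ≥0∞)
    (hΦ : ∀ a h, 0 ≤ a → 0 < h → a + h ≤ 1 → ∀ x ∈ slab c i₀ a h, ∀ t ∈ Ioc (R * h) (2 * R * h),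
      ENNReal.ofReal (c' * (‖g (a + h) + g a - (2 : ℝ) • g (a + h / 2)‖ / h) ^ m / h) ≤ Φ x t)
    {a h s : ℝ} (H : Rr g m a h s) (ha : 0 ≤ a) (hh : 0 < h) (hah : a + h ≤ 1) :
    ENNReal.ofReal (c' * R / c * h * s) ≤
      ∫⁻ x in slab c i₀ a h, ∫⁻ t in Ioc 0 (2 * R * h), Φ x t := by
  induction H with
  | leaf a h => simp
  | node a h s₁ s₂ h₁ h₂ i₁ i₂ =>
    have j₁ := i₁ ha (by positivity) (by linarith)
    have j₂ := i₂ (by positivity) (by positivity) (by linarith)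
    have hs₁ := h₁.nonneg (by positivity)
    have hs₂ := h₂.nonneg (by positivity)
    set D := ‖g (a + h) + g a - (2 : ℝ) • g (a + h / 2)‖ / h with hD
    have hD0 : 0 ≤ D := by positivity
    have eR : 2 * R * (h / 2) = R * h := by ring
    rw [eR] at j₁ j₂
    have hU : Ioc (0 : ℝ) (2 * R * h) = Ioc 0 (R * h) ∪ Ioc (R * h) (2 * R * h) :=
      (Ioc_union_Ioc_eq_Ioc (by positivity) (by nlinarith [mul_pos hR hh])).symm
    calc ENNReal.ofReal (c' * R / c * h * ((s₁ + s₂) / 2 + D ^ m))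
        = ENNReal.ofReal (c' * R / c * (h / 2) * s₁) + ENNReal.ofReal (c' * R / c * (h / 2) * s₂)
          + ENNReal.ofReal (c' * D ^ m / h) * ENNReal.ofReal (R * h)
            * volume (slab c i₀ a h) := by
          rw [volume_slab, ← ENNReal.ofReal_mul (by positivity), ← ENNReal.ofReal_mul (by positivity),
            ← ENNReal.ofReal_add (by positivity) (by positivity),
            ← ENNReal.ofReal_add (by positivity) (by positivity)]
          congr 1
          field_simp
      _ ≤ (∫⁻ x in slab c i₀ a h, ∫⁻ t in Ioc 0 (R * h), Φ x t)
          + ∫⁻ x in slab c i₀ a h, ENNReal.ofReal (c' * D ^ m / h) * ENNReal.ofReal (R * h) := by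
          gcongr
          · rw [slab_split hc i₀ a h hh, lintegral_union (measurableSet_slab _ _ _ _)
              (slab_disj hc i₀ a h)]
            gcongr
          · rw [lintegral_const, Measure.restrict_apply_univ]
      _ ≤ ∫⁻ x in slab c i₀ a h, ((∫⁻ t in Ioc 0 (R * h), Φ x t)
            + ENNReal.ofReal (c' * D ^ m / h) * ENNReal.ofReal (R * h)) := le_lintegral_add _ _
      _ ≤ _ := by
          refine setLIntegral_mono' (measurableSet_slab _ _ _ _) ?_
          intro x hx
          rw [hU, lintegral_union measurableSet_Ioc
            (by rw [Set.disjoint_left]; intro t p1 p2; exact absurd p1.2 (not_le.2 p2.1))]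
          gcongr
          calc ENNReal.ofReal (c' * D ^ m / h) * ENNReal.ofReal (R * h)
              = ∫⁻ t in Ioc (R * h) (2 * R * h), ENNReal.ofReal (c' * D ^ m / h) := by
                rw [lintegral_const, Measure.restrict_apply_univ, Real.volume_Ioc]
                congr 2
                ring
            _ ≤ _ := setLIntegral_mono' measurableSet_Ioc fun t ht => hΦ a h ha hh hah x hx t ht

end SlabSec



section PtSec
variable {n : ℕ} {N : EuclideanSpace ℝ (Fin n) → ℝ}
variable {Y : Type*} [NormedAddCommGroup Y] [NormedSpace ℝ Y]

lemma max_of_three {A a b c : ℝ} (h : A ≤ a + b + 2 * c) : A / 4 ≤ a ∨ A / 4 ≤ b ∨ A / 4 ≤ c := by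
  by_contra! H
  linarith [H.1, H.2.1, H.2.2]

lemma pt_lower_aux (hN : IsNorm N) {q : ℝ} (hq : 0 < q) {E : EuclideanSpace ℝ (Fin n) → Y}
    (hE : Continuous E) {A r t : ℝ} (hA : 0 ≤ A) (hr : 0 < r) (p x w₁ w₂ : EuclideanSpace ℝ (Fin n))
    (h0 : ∀ y, N (y - p) ≤ r → N (y - x) ≤ t)
    (h1 : ∀ y, N (y - p) ≤ r → N (y + w₁ - x) ≤ t)
    (h2 : ∀ y, N (y - p) ≤ r → N (y + w₂ - x) ≤ t)
    (h3 : ∀ y, N (y - p) ≤ r → A ≤ ‖E (y + w₁) + E y - (2 : ℝ) • E (y + w₂)‖) :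
    ENNReal.ofReal (r ^ n * (A / 4) ^ q) * volume {y | N y ≤ 1}
      ≤ 3 * ∫⁻ y in {y | N (y - x) ≤ t}, (‖E y‖₊ : ℝ≥0∞) ^ q := by
  set B := {y | N (y - x) ≤ t}
  set S := {y | N (y - p) ≤ r} with hS
  have mS : MeasurableSet S := hN.measurableSet_ball p r
  set φ : EuclideanSpace ℝ (Fin n) → ℝ≥0∞ := fun y => (‖E y‖₊ : ℝ≥0∞) ^ q with hφ
  have mφ : Measurable φ := by
    have : Measurable fun y => (‖E y‖₊ : ℝ≥0∞) :=
      (ENNReal.continuous_coe.comp hE.nnnorm).measurable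
    exact this.pow_const q
  have sh : ∀ w, (∀ y, N (y - p) ≤ r → N (y + w - x) ≤ t) →
      ∫⁻ y in S, φ (y + w) ≤ ∫⁻ y in B, φ y := by
    intro w hw
    rw [← lintegral_indicator mS, ← lintegral_indicator (hN.measurableSet_ball x t),
      ← lintegral_add_right_eq_self (fun y => B.indicator φ y) w]
    refine lintegral_mono fun y => ?_
    by_cases hy : y ∈ S
    · rw [indicator_of_mem hy, indicator_of_mem (show y + w ∈ B from hw y hy)]
    · rw [indicator_of_notMem hy]; exact zero_le
  have s0 := sh 0 (by simpa using h0)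
  have s1 := sh w₁ h1
  have s2 := sh w₂ h2
  simp only [add_zero] at s0
  calc ENNReal.ofReal (r ^ n * (A / 4) ^ q) * volume {y | N y ≤ 1}
      = ∫⁻ y in S, ENNReal.ofReal ((A / 4) ^ q) := by
        rw [lintegral_const, Measure.restrict_apply_univ, hN.volume_ball p hr,
          ENNReal.ofReal_mul (by positivity)]
        ring
    _ ≤ ∫⁻ y in S, (φ y + φ (y + w₁) + φ (y + w₂)) := by
        refine setLIntegral_mono' mS fun y hy => ?_
        have key : ∀ z : Y, A / 4 ≤ ‖z‖ → ENNReal.ofReal ((A / 4) ^ q) ≤ (‖z‖₊ : ℝ≥0∞) ^ q := by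
          intro z hz
          rw [← ENNReal.ofReal_rpow_of_nonneg (by positivity) hq.le]
          gcongr
          rw [← enorm_eq_nnnorm, ← ofReal_norm]
          exact ENNReal.ofReal_le_ofReal hz
        have : A ≤ ‖E (y + w₁)‖ + ‖E y‖ + 2 * ‖E (y + w₂)‖ := by
          refine (h3 y hy).trans ((norm_sub_le _ _).trans ?_)
          rw [norm_smul, Real.norm_of_nonneg zero_le_two]
          gcongr
          exact norm_add_le _ _
        rcases max_of_three this with h | h | h
        · exact (key _ h).trans (le_add_right (le_add_left le_rfl))
        · exact (key _ h).trans (le_add_right (le_add_right le_rfl))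
        · exact (key _ h).trans (le_add_left le_rfl)
    _ = (∫⁻ y in S, φ y) + (∫⁻ y in S, φ (y + w₁)) + ∫⁻ y in S, φ (y + w₂) := by
        have m1 : Measurable fun y => φ y + φ (y + w₁) := mφ.add (mφ.comp (measurable_add_const _))
        rw [lintegral_add_left m1, lintegral_add_left mφ]
    _ ≤ (∫⁻ y in B, φ y) + (∫⁻ y in B, φ y) + ∫⁻ y in B, φ y := by gcongr
    _ = _ := by ring

/-- the constant in the pointwise lower bound -/
def cLow (n : ℕ) (q R : ℝ) : ℝ := 1 / 3 * (1 / (16 * R)) ^ n * (1 / 16) ^ q / (2 * R) ^ (q + 1)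

lemma cLow_pos (n : ℕ) (q : ℝ) {R : ℝ} (hR : 0 < R) : 0 < cLow n q R := by
  unfold cLow; positivity

lemma cLow_est (n : ℕ) {q R D h t : ℝ} (hq : 0 < q) (hR : 0 < R) {m : ℕ} (hm : q + n ≤ m)
    (hD : 0 < D) (hD1 : D ≤ 1) (hh : 0 < h) (ht : 0 < t) (ht' : t ≤ 2 * R * h) :
    3 * (cLow n q R * D ^ m / h) * t ^ (q + 1) * t ^ n ≤ (D * h / 8) ^ n * (D * h / 4 / 4) ^ q := by
  have e1 : D ^ m ≤ D ^ q * D ^ n := by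
    rw [← Real.rpow_natCast D n, ← Real.rpow_add hD, ← Real.rpow_natCast D m]
    exact Real.rpow_le_rpow_of_exponent_ge hD hD1 hm
  have e2 : t ^ (q + 1) ≤ (2 * R) ^ (q + 1) * (h ^ q * h) := by
    have : t ^ (q + 1) ≤ (2 * R * h) ^ (q + 1) :=
      Real.rpow_le_rpow ht.le ht' (by linarith)
    rwa [Real.mul_rpow (by positivity) hh.le, Real.rpow_add hh, Real.rpow_one] at this
  have e3 : t ^ n ≤ (2 * R * h) ^ n := by gcongr
  have e4 : (D * h / 4 / 4) ^ q = (1 / 16) ^ q * (D ^ q * h ^ q) := by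
    rw [← Real.mul_rpow hD.le hh.le, ← Real.mul_rpow (by positivity) (by positivity)]
    congr 1; ring
  have e5 : (1 / (16 * R)) ^ n * (2 * R * h) ^ n * D ^ n = (D * h / 8) ^ n := by
    rw [← mul_pow, ← mul_pow]; congr 1; field_simp; norm_num
  have hcl := cLow_pos n q hR
  calc 3 * (cLow n q R * D ^ m / h) * t ^ (q + 1) * t ^ n
      ≤ 3 * (cLow n q R * (D ^ q * D ^ n) / h) * ((2 * R) ^ (q + 1) * (h ^ q * h))
        * (2 * R * h) ^ n := by gcongr
    _ = ((1 / (16 * R)) ^ n * (2 * R * h) ^ n * D ^ n) * ((1 / 16) ^ q * (D ^ q * h ^ q)) := by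
        unfold cLow
        have : (2 * R) ^ (q + 1) ≠ 0 := by positivity
        field_simp
    _ = _ := by rw [e5, e4]

lemma pt_lower (hN : IsNorm N) (ℓ : EuclideanSpace ℝ (Fin n) →ₗ[ℝ] ℝ) (hℓ : ∀ x, |ℓ x| ≤ N x)
    {e : EuclideanSpace ℝ (Fin n)} (he : ℓ e = 1) {R : ℝ} (hR : R = 2 * N e + 1)
    {q : ℝ} (hq : 0 < q) {m : ℕ} (hm : q + n ≤ m)
    {g : ℝ → Y} (hg : ∀ s t, ‖g s - g t‖ ≤ |s - t|) {f : EuclideanSpace ℝ (Fin n) → Y}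
    (hf : Continuous f) {ρ : ℝ} (hfg : ∀ y, N y ≤ ρ → f y = (1 / 2 : ℝ) • g (ℓ y))
    {x : EuclideanSpace ℝ (Fin n)} (hx : N x + R ≤ ρ) {a h t : ℝ} (hh : 0 < h) (hh1 : h ≤ 1)
    (hax : a ≤ ℓ x) (hxa : ℓ x ≤ a + h) (ht : R * h < t) (ht' : t ≤ 2 * R * h)
    (Λ : EuclideanSpace ℝ (Fin n) →ᵃ[ℝ] Y) :
    ENNReal.ofReal (cLow n q R * (‖g (a + h) + g a - (2 : ℝ) • g (a + h / 2)‖ / h) ^ m / h) *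
      ENNReal.ofReal (t ^ (q + 1)) ≤
    (∫⁻ y in {y | N (y - x) ≤ t}, (‖f y - Λ y‖₊ : ℝ≥0∞) ^ q) / volume {y | N (y - x) ≤ t} := by
  have hNe := hN.nonneg e
  have hR0 : 0 < R := by linarith
  have ht0 : 0 < t := lt_trans (by positivity) ht
  set D := ‖g (a + h) + g a - (2 : ℝ) • g (a + h / 2)‖ / h with hD
  have hDh : D * h = ‖g (a + h) + g a - (2 : ℝ) • g (a + h / 2)‖ := by rw [hD]; field_simp
  have hD0 : 0 ≤ D := by positivity
  have hm0 : m ≠ 0 := by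
    rintro rfl
    have : (0 : ℝ) ≤ n := by positivity
    push_cast at hm
    linarith
  rcases hD0.eq_or_lt with hz | hDp
  · rw [← hz, zero_pow hm0]; simp
  have hD1 : D ≤ 1 := by
    rw [hD, div_le_one hh]
    have e : g (a + h) + g a - (2 : ℝ) • g (a + h / 2)
        = (g (a + h) - g (a + h / 2)) + (g a - g (a + h / 2)) := by module
    rw [e]
    refine (norm_add_le _ _).trans ?_
    have p1 := hg (a + h) (a + h / 2)
    have p2 := hg a (a + h / 2)
    rw [abs_of_nonneg (by linarith)] at p1
    rw [abs_of_nonpos (by linarith)] at p2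
    linarith
  set r := D * h / 8 with hr
  have hrp : 0 < r := by positivity
  have hrh : r ≤ h / 8 := by rw [hr]; nlinarith
  set p := x + (a - ℓ x) • e with hp
  have hℓp : ℓ p = a := by rw [hp, map_add, map_smul, he]; simp
  have cont : ∀ c : ℝ, 0 ≤ c → c ≤ h → ∀ y, N (y - p) ≤ r → N (y + c • e - x) ≤ R * h := by
    intro c hc hch y hy
    have e1 : y + c • e - x = (y - p) + ((a - ℓ x) • e + c • e) := by rw [hp]; abel
    rw [e1]
    have p1 := hN.add_le (y - p) ((a - ℓ x) • e + c • e)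
    have p2 := hN.add_le ((a - ℓ x) • e) (c • e)
    rw [hN.2.1, hN.2.1, abs_of_nonneg hc, abs_of_nonpos (by linarith)] at p2
    have p3 : -(a - ℓ x) * N e ≤ h * N e := by gcongr; linarith
    have p4 : c * N e ≤ h * N e := by gcongr
    rw [hR]; nlinarith
  have small : ∀ c : ℝ, 0 ≤ c → c ≤ h → ∀ y, N (y - p) ≤ r → N (y + c • e) ≤ ρ := by
    intro c hc hch y hy
    have p1 := hN.add_le (y + c • e - x) x
    rw [sub_add_cancel] at p1
    have p2 := cont c hc hch y hy
    have p3 : R * h ≤ R := by nlinarith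
    linarith
  have fval : ∀ c : ℝ, 0 ≤ c → c ≤ h → ∀ y, N (y - p) ≤ r →
      f (y + c • e) = (1 / 2 : ℝ) • g (ℓ y + c) := by
    intro c hc hch y hy
    rw [hfg _ (small c hc hch y hy), map_add, map_smul, he]; simp
  set E : EuclideanSpace ℝ (Fin n) → Y := fun y => f y - Λ y with hE
  have cE : Continuous E := hf.sub Λ.continuous_of_finiteDimensional
  have main := pt_lower_aux hN hq cE (A := D * h / 4) (by positivity) hrp p x (h • e) ((h / 2) • e)
    (t := t)
    (fun y hy => by simpa using (cont 0 le_rfl hh.le y hy).trans ht.le)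
    (fun y hy => (cont h hh.le le_rfl y hy).trans ht.le)
    (fun y hy => (cont (h / 2) (by linarith) (by linarith) y hy).trans ht.le)
    (by
      intro y hy
      have aff : Λ (y + h • e) + Λ y - (2 : ℝ) • Λ (y + (h / 2) • e) = 0 := by
        have hl : ∀ w, Λ (y + w) = Λ.linear w + Λ y := by
          intro w
          have := Λ.map_vadd y w
          simpa [add_comm] using this
        rw [hl, hl, map_smul, map_smul]
        module
      have f0 := fval 0 le_rfl hh.le y hy
      simp only [zero_smul, add_zero] at f0
      have e1 : E (y + h • e) + E y - (2 : ℝ) • E (y + (h / 2) • e)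
          = (1 / 2 : ℝ) • ((g (a + h) + g a - (2 : ℝ) • g (a + h / 2))
            - ((g (a + h) - g (ℓ y + h)) + (g a - g (ℓ y))
              - (2 : ℝ) • (g (a + h / 2) - g (ℓ y + h / 2)))) := by
        have : E (y + h • e) + E y - (2 : ℝ) • E (y + (h / 2) • e)
            = (f (y + h • e) + f y - (2 : ℝ) • f (y + (h / 2) • e))
              - (Λ (y + h • e) + Λ y - (2 : ℝ) • Λ (y + (h / 2) • e)) := by
          simp only [hE]; module
        rw [this, aff, fval h hh.le le_rfl y hy, fval (h / 2) (by linarith) (by linarith) y hy, f0]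
        module
      rw [e1, norm_smul, Real.norm_of_nonneg (by norm_num)]
      have hy' : |a - ℓ y| ≤ r := by
        have := hℓ (y - p)
        rw [map_sub, hℓp, abs_sub_comm] at this
        exact this.trans hy
      have b1 : ‖g (a + h) - g (ℓ y + h)‖ ≤ r := (hg _ _).trans (by rwa [add_sub_add_right_eq_sub])
      have b2 : ‖g a - g (ℓ y)‖ ≤ r := (hg _ _).trans hy'
      have b3 : ‖g (a + h / 2) - g (ℓ y + h / 2)‖ ≤ r :=
        (hg _ _).trans (by rwa [add_sub_add_right_eq_sub])
      have b4 : ‖(g (a + h) - g (ℓ y + h)) + (g a - g (ℓ y))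
              - (2 : ℝ) • (g (a + h / 2) - g (ℓ y + h / 2))‖ ≤ 4 * r := by
        refine (norm_sub_le _ _).trans ?_
        rw [norm_smul, Real.norm_of_nonneg zero_le_two]
        have := norm_add_le (g (a + h) - g (ℓ y + h)) (g a - g (ℓ y))
        linarith
      have b5 := norm_sub_norm_le (g (a + h) + g a - (2 : ℝ) • g (a + h / 2))
        ((g (a + h) - g (ℓ y + h)) + (g a - g (ℓ y))
              - (2 : ℝ) • (g (a + h / 2) - g (ℓ y + h / 2)))
      rw [← hDh] at b5
      linarith)
  have V0 := hN.volume_one_pos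
  have V1 := hN.volume_one_lt_top
  rw [hN.volume_ball x ht0]
  rw [ENNReal.le_div_iff_mul_le (Or.inl (by
      refine mul_ne_zero ?_ V0.ne'
      exact (ENNReal.ofReal_pos.2 (by positivity)).ne')) (Or.inl (by
      exact ENNReal.mul_ne_top ENNReal.ofReal_ne_top V1.ne))]
  have est := cLow_est n hq hR0 hm hDp hD1 hh ht0 ht'
  refine (ENNReal.mul_le_mul_iff_right (a := 3) (by norm_num) (by norm_num)).1 ?_
  refine le_trans ?_ main
  have hcl := cLow_pos n q hR0
  have e3 : (3 : ℝ≥0∞) = ENNReal.ofReal 3 := by simp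
  rw [e3, ← mul_assoc, ← mul_assoc, ← ENNReal.ofReal_mul (by positivity),
    ← ENNReal.ofReal_mul (by positivity), ← ENNReal.ofReal_mul (by positivity)]
  refine mul_le_mul_left (ENNReal.ofReal_le_ofReal ?_) _
  refine le_trans (le_of_eq ?_) est
  ring

end PtSec



section ConcSec
variable {n : ℕ} {N : EuclideanSpace ℝ (Fin n) → ℝ}
variable {Y : Type*} [NormedAddCommGroup Y] [NormedSpace ℝ Y]

lemma cutoff_lip (hN : IsNorm N) {g : ℝ → Y} (hg : ∀ s t, ‖g s - g t‖ ≤ |s - t|)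
    (hg1 : ∀ t, ‖g t‖ ≤ 1) (ℓ : EuclideanSpace ℝ (Fin n) →ₗ[ℝ] ℝ) (hℓ : ∀ x, |ℓ x| ≤ N x) (ρ : ℝ)
    (x y : EuclideanSpace ℝ (Fin n)) :
    ‖(max 0 (min 1 (ρ + 1 - N x)) / 2) • g (ℓ x) - (max 0 (min 1 (ρ + 1 - N y)) / 2) • g (ℓ y)‖
      ≤ N (x - y) := by
  have hχ : |max 0 (min 1 (ρ + 1 - N x)) - max 0 (min 1 (ρ + 1 - N y))| ≤ N (x - y) := by
    refine (abs_max_sub_max_le_max _ _ _ _).trans ?_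
    rw [sub_self, abs_zero]
    refine max_le (hN.nonneg _) ((abs_min_sub_min_le_max _ _ _ _).trans ?_)
    rw [sub_self, abs_zero]
    refine max_le (hN.nonneg _) ?_
    have := hN.abs_sub_le y x
    rw [hN.sub_comm] at this
    refine le_trans (le_of_eq ?_) this
    congr 1; ring
  set u := max 0 (min 1 (ρ + 1 - N x))
  set v := max 0 (min 1 (ρ + 1 - N y)) with hv
  have v0 : 0 ≤ v := le_max_left _ _
  have v1 : v ≤ 1 := max_le zero_le_one (min_le_left _ _)
  have e : (u / 2) • g (ℓ x) - (v / 2) • g (ℓ y)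
      = ((u - v) / 2) • g (ℓ x) + (v / 2) • (g (ℓ x) - g (ℓ y)) := by module
  rw [e]
  refine (norm_add_le _ _).trans ?_
  rw [norm_smul, norm_smul, Real.norm_eq_abs, Real.norm_eq_abs, abs_div, abs_div, abs_of_nonneg v0,
    abs_of_nonneg (zero_le_two : (0 : ℝ) ≤ 2)]
  have h1 : ‖g (ℓ x) - g (ℓ y)‖ ≤ N (x - y) := by
    refine (hg _ _).trans ?_
    rw [← map_sub]; exact hℓ _
  have a1 : |u - v| / 2 * ‖g (ℓ x)‖ ≤ N (x - y) / 2 * 1 := by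
    gcongr
    · linarith [hN.nonneg (x - y)]
    · exact hg1 _
  have a2 : v / 2 * ‖g (ℓ x) - g (ℓ y)‖ ≤ 1 / 2 * N (x - y) := by gcongr
  linarith

theorem ucnorm_of_dorronsoro (hn : 0 < n) (hN : IsNorm N) {q C : ℝ} (hq : 2 ≤ q)
    (hD : DorronsoroIneq q C N Y) : AdmitsEquivUniformlyConvexNorm Y := by
  obtain ⟨c, hc, hcN⟩ := hN.exists_norm_le
  set i₀ : Fin n := ⟨0, hn⟩
  set ℓ : EuclideanSpace ℝ (Fin n) →ₗ[ℝ] ℝ :=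
    c • ((EuclideanSpace.proj i₀ : EuclideanSpace ℝ (Fin n) →L[ℝ] ℝ) :
      EuclideanSpace ℝ (Fin n) →ₗ[ℝ] ℝ) with hℓdef
  have ℓap : ∀ x, ℓ x = c * x i₀ := fun x => by simp [hℓdef]
  have hℓ : ∀ x, |ℓ x| ≤ N x := by
    intro x
    rw [ℓap, abs_mul, abs_of_pos hc]
    refine le_trans ?_ (hcN x)
    gcongr
    exact PiLp.norm_apply_le x i₀
  set e : EuclideanSpace ℝ (Fin n) := c⁻¹ • EuclideanSpace.single i₀ 1 with hedef
  have he : ℓ e = 1 := by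
    rw [ℓap]; simp [hedef, hc.ne']
  obtain ⟨R, hR⟩ : ∃ R, R = 2 * N e + 1 := ⟨_, rfl⟩
  have hR0 : 0 < R := by have := hN.nonneg e; linarith
  set ρ₀ := ∑ i, (1 + 1 / c) * N (EuclideanSpace.single (i : Fin n) (1 : ℝ))
  have hslab : ∀ x ∈ slab c i₀ 0 1, N x ≤ ρ₀ := by
    intro x hx
    rw [mem_slab hc] at hx
    refine (hN.le_coord x).trans (Finset.sum_le_sum fun i _ => ?_)
    have := hN.nonneg (EuclideanSpace.single (i : Fin n) (1 : ℝ))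
    gcongr
    have hc' : 0 < 1 / c := by positivity
    by_cases hi : i = i₀
    · subst hi
      have h1 : 0 ≤ x i₀ := by
        by_contra! h
        nlinarith [hx.1.1]
      have h2 : x i₀ ≤ 1 / c := by
        rw [le_div_iff₀ hc]; linarith [hx.1.2]
      rw [abs_of_nonneg h1]; linarith
    · have := hx.2 i hi
      rw [abs_of_nonneg this.1]; linarith [this.2]
  set ρ := ρ₀ + R
  set m := ⌈q⌉₊ + n
  have hm : q + n ≤ m := by
    have := Nat.le_ceil q
    simp only [m]; push_cast; linarith
  set M := ENNReal.ofReal C * volume {y | N y ≤ ρ + 1} with hM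
  have hMt : M ≠ ∞ := ENNReal.mul_ne_top ENNReal.ofReal_ne_top (hN.isCompact_le _).measure_lt_top.ne
  have hcl := cLow_pos n q hR0
  set κ := cLow n q R * R / c with hκ
  have hκ0 : 0 < κ := by positivity
  refine ucnorm_of_bound Y m (M.toReal / κ) ?_
  intro k x s H
  obtain ⟨g, hg, hg1, hRr⟩ := exists_path_bdd H
  set f : EuclideanSpace ℝ (Fin n) → Y :=
    fun x => (max 0 (min 1 (ρ + 1 - N x)) / 2) • g (ℓ x) with hf
  have flip : ∀ x y, ‖f x - f y‖ ≤ N (x - y) := cutoff_lip hN hg hg1 ℓ hℓ ρ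
  have fcont : Continuous f := by
    obtain ⟨c', hc', h⟩ := hN.exists_le_norm
    have : LipschitzWith ⟨c', hc'.le⟩ f := by
      refine LipschitzWith.of_dist_le_mul fun x y => ?_
      rw [dist_eq_norm, dist_eq_norm]
      exact (flip x y).trans (h _)
    exact this.continuous
  have hts : tsupport f ⊆ {y | N y ≤ ρ + 1} := by
    refine closure_minimal ?_ (isClosed_le hN.continuous continuous_const)
    intro y hy
    by_contra hlt
    have hlt' : ρ + 1 < N y := not_le.1 hlt
    apply hy
    have : max 0 (min 1 (ρ + 1 - N y)) = 0 := max_eq_left ((min_le_right _ _).trans (by linarith))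
    simp [hf, this]
  have hcs : HasCompactSupport f := (hN.isCompact_le (ρ + 1)).of_isClosed_subset
    (isClosed_tsupport f) hts
  have fg : ∀ y, N y ≤ ρ → f y = (1 / 2 : ℝ) • g (ℓ y) := by
    intro y hy
    have : max 0 (min 1 (ρ + 1 - N y)) = 1 := by
      rw [min_eq_left (by linarith), max_eq_right zero_le_one]
    simp only [hf, this]
  have hDf := hD f hcs flip
  set Φ : EuclideanSpace ℝ (Fin n) → ℝ → ℝ≥0∞ := fun x t =>
        (⨅ Λ : EuclideanSpace ℝ (Fin n) →ᵃ[ℝ] Y,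
            (∫⁻ y in {y : EuclideanSpace ℝ (Fin n) | N (y - x) ≤ t},
                (‖f y - Λ y‖₊ : ℝ≥0∞) ^ q)
              / volume {y : EuclideanSpace ℝ (Fin n) | N (y - x) ≤ t})
          / ENNReal.ofReal (t ^ (q + 1)) with hΦ
  have hlow := tree_lower hc hcl hR0 i₀ Φ (g := g) (m := m) (by
    intro a h ha hh hah x hx t ht
    have hx0 : x ∈ slab c i₀ 0 1 := by
      rw [mem_slab hc] at hx ⊢
      exact ⟨⟨ha.trans hx.1.1, by linarith [hx.1.2]⟩, hx.2⟩
    have hN0 := hslab x hx0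
    rw [mem_slab hc] at hx
    have ht0 : 0 < t := lt_trans (by positivity) ht.1
    simp only [hΦ]
    rw [ENNReal.le_div_iff_mul_le
      (Or.inl (ENNReal.ofReal_pos.2 (Real.rpow_pos_of_pos ht0 _)).ne') (Or.inl ENNReal.ofReal_ne_top)]
    refine le_iInf fun Λ => ?_
    exact pt_lower hN ℓ hℓ he hR (by linarith) hm hg fcont fg (by simp only [ρ]; linarith) hh
      (by linarith) (by rw [ℓap]; exact hx.1.1) (by rw [ℓap]; exact hx.1.2.le) ht.1 ht.2 Λ)
    hRr le_rfl one_pos (by norm_num)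
  have htot : ENNReal.ofReal (κ * 1 * s) ≤ M := by
    refine hlow.trans ?_
    calc ∫⁻ x in slab c i₀ 0 1, ∫⁻ t in Ioc 0 (2 * R * 1), Φ x t
        ≤ ∫⁻ x in slab c i₀ 0 1, ∫⁻ t in Ioi 0, Φ x t := by
          refine lintegral_mono fun x => ?_
          exact lintegral_mono_set fun t ht => ht.1
      _ ≤ ∫⁻ x, ∫⁻ t in Ioi 0, Φ x t := setLIntegral_le_lintegral _ _
      _ ≤ _ := hDf
      _ ≤ M := by rw [hM]; gcongr
  rw [ENNReal.ofReal_le_iff_le_toReal hMt] at htot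
  rw [le_div_iff₀ hκ0]
  linarith

end ConcSec



section GSec
variable {Y : Type*} [NormedAddCommGroup Y] [NormedSpace ℝ Y]

lemma exists_G (hA : AdmitsEquivUniformlyConvexNorm Y) : ∃ q : ℕ, 2 ≤ q ∧ ∀ R : ℝ, 0 < R →
    ∃ (C₀ : ℝ) (G : Y → ℝ), 0 ≤ C₀ ∧ ContinuousOn G (closedBall 0 R) ∧
      (∀ x, ‖x‖ ≤ R → 0 ≤ G x ∧ G x ≤ C₀) ∧ G 0 = 0 ∧
      ∀ x y, ‖x‖ ≤ R → ‖y‖ ≤ R →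
        G ((1 / 2 : ℝ) • (x + y)) + ‖x - y‖ ^ q ≤ (G x + G y) / 2 := by
  obtain ⟨N, hN, ⟨a, b, ha, hb, hab⟩, hU⟩ := hA
  obtain ⟨m, hm, C, hC, hT⟩ := tree_bound hN hU
  obtain ⟨F, F1, F2, F3, F4⟩ := exists_concave hN hT
  refine ⟨m, hm, fun R hR => ?_⟩
  set ρ : ℝ := 1 / (2 * b * R) with hρ
  have hρ0 : 0 < ρ := by positivity
  set c : ℝ := (2 / (a * ρ)) ^ m with hc
  have hc0 : 0 < c := by positivity
  have hs : ∀ x, ‖x‖ ≤ R → N (ρ • x) ≤ 1 / 2 := by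
    intro x hx
    rw [hN.2.1, abs_of_pos hρ0]
    calc ρ * N x ≤ ρ * (b * R) := by
          gcongr; exact (hab x).2.trans (by gcongr)
      _ = 1 / 2 := by rw [hρ]; field_simp
  have h0 : ∀ x, N x ≤ 1 → F x ≤ F 0 := by
    intro x hx
    have := F2 0 x (by simpa using hx) (by simpa [hN.neg] using hx)
    rw [zero_add, zero_sub, F3] at this
    have : 0 ≤ N x ^ m := pow_nonneg (hN.nonneg _) _
    linarith
  refine ⟨c * C, fun x => c * (F 0 - F (ρ • x)), by positivity, ?_, ?_, by simp, ?_⟩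
  · rw [Metric.continuousOn_iff]
    intro x hx ε hε
    rw [mem_closedBall_zero_iff] at hx
    obtain ⟨k, hk⟩ := exists_pow_lt_of_lt_one (show 0 < ε / (c * C + 1) by positivity)
      (show (1 / 2 : ℝ) < 1 by norm_num)
    refine ⟨1 / 2 ^ (k + 1) / (ρ * b), by positivity, fun y hy hxy => ?_⟩
    rw [mem_closedBall_zero_iff] at hy
    have e : N (ρ • y - ρ • x) ≤ 1 / 2 ^ (k + 1) := by
      rw [← smul_sub, hN.2.1, abs_of_pos hρ0]
      rw [dist_eq_norm, lt_div_iff₀ (by positivity)] at hxy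
      have := (hab (y - x)).2
      nlinarith
    have := F4 k (ρ • y) (ρ • x) (hs y hy) (hs x hx) e
    rw [Real.dist_eq]
    have e2 : c * (F 0 - F (ρ • y)) - c * (F 0 - F (ρ • x)) = -(c * (F (ρ • y) - F (ρ • x))) := by
      ring
    rw [e2, abs_neg, abs_mul, abs_of_pos hc0]
    have e3 : C / 2 ^ k = C * (1 / 2) ^ k := by rw [div_pow, one_pow]; ring
    rw [e3] at this
    rw [lt_div_iff₀ (by positivity)] at hk
    have hp : (0 : ℝ) < (1 / 2) ^ k := by positivity
    calc c * |F (ρ • y) - F (ρ • x)| ≤ c * (C * (1 / 2) ^ k) := by gcongr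
      _ < ε := by nlinarith
  · intro x hx
    have h1 := (hs x hx).trans (by norm_num : (1 / 2 : ℝ) ≤ 1)
    have h2 := h0 _ h1
    have h3 := F1 0 (by rw [hN.zero]; norm_num)
    have h4 := F1 _ h1
    constructor
    · exact mul_nonneg hc0.le (by linarith)
    · exact mul_le_mul_of_nonneg_left (by linarith) hc0.le
  · intro x y hx hy
    have e1 : ρ • (1 / 2 : ℝ) • (x + y) + ρ • (1 / 2 : ℝ) • (x - y) = ρ • x := by module
    have e2 : ρ • (1 / 2 : ℝ) • (x + y) - ρ • (1 / 2 : ℝ) • (x - y) = ρ • y := by module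
    have := F2 (ρ • (1 / 2 : ℝ) • (x + y)) (ρ • (1 / 2 : ℝ) • (x - y))
      (by rw [e1]; exact (hs x hx).trans (by norm_num))
      (by rw [e2]; exact (hs y hy).trans (by norm_num))
    rw [e1, e2] at this
    have h5 : ‖x - y‖ ^ m ≤ c * N (ρ • (1 / 2 : ℝ) • (x - y)) ^ m := by
      rw [hc, ← mul_pow]
      gcongr
      rw [hN.2.1, hN.2.1, abs_of_pos hρ0, abs_of_pos (by norm_num : (0 : ℝ) < 1 / 2)]
      have := (hab (x - y)).1
      have e : 2 / (a * ρ) * (ρ * (1 / 2 * N (x - y))) = N (x - y) / a := by field_simp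
      rw [e, le_div_iff₀ ha]
      linarith
    nlinarith

end GSec



section SDSec
variable {E : Type*} [NormedAddCommGroup E] [NormedSpace ℝ E] [MeasurableSpace E] [BorelSpace E]
  {μ : Measure E} [μ.IsAddLeftInvariant] [IsFiniteMeasureOnCompacts μ]
variable {Y : Type*} [NormedAddCommGroup Y] [NormedSpace ℝ Y]

lemma telescope_dyadic {S γ : ℝ → ℝ≥0∞} {D : ℝ≥0∞} (hD : D ≠ ∞) (q : ℕ)
    (h1 : ∀ t, 0 < t → ENNReal.ofReal ((t ^ q)⁻¹) * S t + γ (2 * t) ≤ γ t)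
    (h2 : ∀ t, 0 < t → γ t ≤ D) :
    ∫⁻ t in Ioi (0 : ℝ), ENNReal.ofReal ((t ^ (q + 1))⁻¹) * S t ≤ D := by
  have main : ∀ a b : ℝ, 0 < a → 2 * a ≤ b →
      ∫⁻ t in Ioc a b, ENNReal.ofReal ((t ^ (q + 1))⁻¹) * S t ≤ D := by
    intro a b ha hab
    set γ' : ℝ → ℝ≥0∞ := fun t => ENNReal.ofReal t⁻¹ * γ t with hγ'
    set X := ∫⁻ t in Ioc (2 * a) (2 * b), γ' t with hX
    have bd : ∀ c d : ℝ, 0 < c → ∫⁻ t in Ioc c d, γ' t ≤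
        ENNReal.ofReal c⁻¹ * D * ENNReal.ofReal (d - c) := by
      intro c d hc
      calc ∫⁻ t in Ioc c d, γ' t ≤ ∫⁻ t in Ioc c d, ENNReal.ofReal c⁻¹ * D := by
            refine setLIntegral_mono' measurableSet_Ioc fun t ht => ?_
            have ht0 : 0 < t := hc.trans ht.1
            simp only [hγ']
            gcongr
            · exact ht.1.le
            · exact h2 t ht0
        _ = _ := by rw [lintegral_const, Measure.restrict_apply_univ, Real.volume_Ioc]
    have hXt : X ≠ ∞ := by
      refine ((bd (2 * a) (2 * b) (by positivity)).trans_lt ?_).ne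
      exact ENNReal.mul_lt_top (ENNReal.mul_lt_top ENNReal.ofReal_lt_top hD.lt_top)
        ENNReal.ofReal_lt_top
    have cv : X = ∫⁻ t in Ioc a b, ENNReal.ofReal t⁻¹ * γ (2 * t) := by
      have im : (fun t : ℝ => 2 * t) '' Ioc a b = Ioc (2 * a) (2 * b) := by
        rw [image_mul_left_Ioc zero_lt_two]
      rw [hX, ← im, lintegral_image_eq_lintegral_abs_deriv_mul (f' := fun _ => 2) measurableSet_Ioc
        (fun x _ => by simpa using ((hasDerivAt_id x).const_mul (2 : ℝ)).hasDerivWithinAt)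
        (fun x _ y _ h => by simpa using h)]
      refine setLIntegral_congr_fun measurableSet_Ioc fun t ht => ?_
      have ht0 : 0 < t := ha.trans ht.1
      simp only [hγ']
      rw [← mul_assoc, ← ENNReal.ofReal_mul (by positivity), abs_of_pos zero_lt_two]
      congr 2
      field_simp
    have ineq : (∫⁻ t in Ioc a b, ENNReal.ofReal ((t ^ (q + 1))⁻¹) * S t) + X
        ≤ (∫⁻ t in Ioc a (2 * a), γ' t) + X := by
      calc (∫⁻ t in Ioc a b, ENNReal.ofReal ((t ^ (q + 1))⁻¹) * S t) + X
          ≤ ∫⁻ t in Ioc a b, (ENNReal.ofReal ((t ^ (q + 1))⁻¹) * S t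
              + ENNReal.ofReal t⁻¹ * γ (2 * t)) := by
            rw [cv]; exact le_lintegral_add _ _
        _ ≤ ∫⁻ t in Ioc a b, γ' t := by
            refine setLIntegral_mono' measurableSet_Ioc fun t ht => ?_
            have ht0 : 0 < t := ha.trans ht.1
            have e : ENNReal.ofReal ((t ^ (q + 1))⁻¹)
                = ENNReal.ofReal t⁻¹ * ENNReal.ofReal ((t ^ q)⁻¹) := by
              rw [← ENNReal.ofReal_mul (by positivity)]
              congr 1
              rw [pow_succ, mul_inv]; ring
            rw [e, mul_assoc, ← mul_add]
            simp only [hγ']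
            gcongr
            exact h1 t ht0
        _ ≤ ∫⁻ t in Ioc a (2 * a) ∪ Ioc (2 * a) (2 * b), γ' t := by
            refine lintegral_mono_set fun t ht => ?_
            rcases le_or_gt t (2 * a) with h | h
            · exact Or.inl ⟨ht.1, h⟩
            · exact Or.inr ⟨h, by linarith [ht.1, ht.2]⟩
        _ ≤ _ := lintegral_union_le _ _ _
    have ineq2 := (ENNReal.add_le_add_iff_right hXt).1 ineq
    refine ineq2.trans ((bd a (2 * a) ha).trans ?_)
    rw [mul_comm (ENNReal.ofReal a⁻¹), mul_assoc, ← ENNReal.ofReal_mul (by positivity)]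
    have : a⁻¹ * (2 * a - a) = 1 := by field_simp; ring
    rw [this]; simp
  have hU : Ioi (0 : ℝ) = ⋃ k : ℕ, Ioc (1 / ((k : ℝ) + 1)) ((k : ℝ) + 2) := by
    ext t
    simp only [mem_Ioi, mem_iUnion, mem_Ioc]
    constructor
    · intro ht
      obtain ⟨k, hk⟩ := exists_nat_gt (max t (1 / t))
      have k1 := (le_max_left _ _).trans_lt hk
      have k2 := (le_max_right _ _).trans_lt hk
      refine ⟨k, ?_, by linarith⟩
      rw [div_lt_iff₀ (by positivity)]
      rw [div_lt_iff₀ ht] at k2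
      nlinarith
    · rintro ⟨k, h, _⟩
      exact lt_trans (by positivity) h
  rw [hU, setLIntegral_iUnion_of_directed]
  · refine iSup_le fun k => main _ _ (by positivity) ?_
    have : (1 : ℝ) / (k + 1) ≤ 1 := by
      rw [div_le_one (by positivity)]
      linarith [(Nat.cast_nonneg k : (0 : ℝ) ≤ k)]
    linarith [(Nat.cast_nonneg k : (0 : ℝ) ≤ k)]
  · refine Monotone.directed_le (f := fun k : ℕ => Ioc (1 / ((k : ℝ) + 1)) ((k : ℝ) + 2)) ?_
    intro k l hkl
    have : (k : ℝ) ≤ l := by exact_mod_cast hkl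
    refine Ioc_subset_Ioc ?_ (by linarith)
    gcongr

lemma second_diff {f : E → Y} (hf : Continuous f) (hfs : HasCompactSupport f) {u : E} {R : ℝ}
    (hR : ∀ x (t : ℝ), 0 < t → ‖f (x + t • u) - f x‖ ≤ R * t) {q : ℕ} {C₀ : ℝ} {G : Y → ℝ}
    (hGc : ContinuousOn G (closedBall 0 R))
    (hGb : ∀ x, ‖x‖ ≤ R → 0 ≤ G x ∧ G x ≤ C₀) (hG0 : G 0 = 0)
    (hGq : ∀ x y, ‖x‖ ≤ R → ‖y‖ ≤ R →
        G ((1 / 2 : ℝ) • (x + y)) + ‖x - y‖ ^ q ≤ (G x + G y) / 2) :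
    ∫⁻ t in Ioi (0 : ℝ), ENNReal.ofReal ((t ^ (q + 1))⁻¹) *
      ∫⁻ x, ‖f (x + (2 * t) • u) + f x - (2 : ℝ) • f (x + t • u)‖ₑ ^ q ∂μ
      ≤ ENNReal.ofReal C₀ * (2 * μ (tsupport f)) := by
  set z : ℝ → E → Y := fun t x => t⁻¹ • (f (x + t • u) - f x) with hz
  have hzR : ∀ t x, 0 < t → ‖z t x‖ ≤ R := by
    intro t x ht
    simp only [hz]
    rw [norm_smul, norm_inv, Real.norm_of_nonneg ht.le, inv_mul_le_iff₀ ht]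
    linarith [hR x t ht]
  have hzc : ∀ t, Continuous (z t) := by
    intro t
    simp only [hz]
    fun_prop
  have hGz : ∀ t, 0 < t → Continuous fun x => G (z t x) := fun t ht =>
    hGc.comp_continuous (hzc t) fun x => by
      rw [mem_closedBall_zero_iff]; exact hzR t x ht
  have hV : μ (tsupport f) ≠ ∞ := hfs.isCompact.measure_lt_top.ne
  refine telescope_dyadic (γ := fun t => ∫⁻ x, ENNReal.ofReal (G (z t x)) ∂μ)
    (ENNReal.mul_ne_top ENNReal.ofReal_ne_top (ENNReal.mul_ne_top (by norm_num) hV)) q ?_ ?_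
  · intro t ht
    have hH : Measurable fun x => ENNReal.ofReal (G (z t x) / 2) :=
      ((hGz t ht).div_const 2).measurable.ennreal_ofReal
    calc _ ≤ ∫⁻ x, (ENNReal.ofReal ((t ^ q)⁻¹) *
              ‖f (x + (2 * t) • u) + f x - (2 : ℝ) • f (x + t • u)‖ₑ ^ q
            + ENNReal.ofReal (G (z (2 * t) x))) ∂μ := by
          rw [← lintegral_const_mul' _ _ ENNReal.ofReal_ne_top]
          exact le_lintegral_add _ _
      _ ≤ ∫⁻ x, (ENNReal.ofReal (G (z t (x + t • u)) / 2)
            + ENNReal.ofReal (G (z t x) / 2)) ∂μ := by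
          refine lintegral_mono fun x => ?_
          have e1 : z (2 * t) x = (1 / 2 : ℝ) • (z t (x + t • u) + z t x) := by
            simp only [hz]
            have : x + t • u + t • u = x + (2 * t) • u := by module
            rw [this, mul_inv]
            module
          have e2 : ‖z t (x + t • u) - z t x‖
              = t⁻¹ * ‖f (x + (2 * t) • u) + f x - (2 : ℝ) • f (x + t • u)‖ := by
            simp only [hz]
            have : x + t • u + t • u = x + (2 * t) • u := by module
            rw [this, ← smul_sub, norm_smul, norm_inv, Real.norm_of_nonneg ht.le]
            congr 2
            module
          have b1 := hGb _ (hzR t (x + t • u) ht)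
          have b2 := hGb _ (hzR t x ht)
          have b3 := hGb _ (hzR (2 * t) x (by positivity))
          have key := hGq _ _ (hzR t (x + t • u) ht) (hzR t x ht)
          rw [← e1, e2, mul_pow, inv_pow] at key
          rw [← ofReal_norm, ← ENNReal.ofReal_pow (norm_nonneg _),
            ← ENNReal.ofReal_mul (by positivity), ← ENNReal.ofReal_add (by positivity) b3.1,
            ← ENNReal.ofReal_add (by linarith [b1.1]) (by linarith [b2.1])]
          exact ENNReal.ofReal_le_ofReal (by linarith)
      _ = ∫⁻ x, ENNReal.ofReal (G (z t x)) ∂μ := by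
          have hlin := lintegral_add_right_eq_self (μ := μ)
            (fun x => ENNReal.ofReal (G (z t x) / 2)) (t • u)
          rw [lintegral_add_right _ hH, hlin, ← lintegral_add_left hH]
          refine lintegral_congr fun x => ?_
          have b2 := hGb _ (hzR t x ht)
          rw [← ENNReal.ofReal_add (by linarith [b2.1]) (by linarith [b2.1])]
          congr 1; ring
  · intro t ht
    set A := tsupport f ∪ (fun x => x + t • u) ⁻¹' tsupport f with hA
    calc ∫⁻ x, ENNReal.ofReal (G (z t x)) ∂μ ≤ ∫⁻ x, A.indicator (fun _ => ENNReal.ofReal C₀) x ∂μ := by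
          refine lintegral_mono fun x => ?_
          by_cases hx : x ∈ A
          · rw [indicator_of_mem hx]
            exact ENNReal.ofReal_le_ofReal (hGb _ (hzR t x ht)).2
          · rw [indicator_of_notMem hx]
            have h1 : f x = 0 := by
              by_contra h
              exact hx (Or.inl (subset_tsupport _ h))
            have h2 : f (x + t • u) = 0 := by
              by_contra h
              exact hx (Or.inr (subset_tsupport _ h))
            simp [hz, h1, h2, hG0]
      _ ≤ ENNReal.ofReal C₀ * μ A := lintegral_indicator_const_le _ _
      _ ≤ _ := by
          gcongr
          refine (measure_union_le _ _).trans ?_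
          rw [measure_preimage_add_right, two_mul]

end SDSec



section JSec
set_option linter.unusedSectionVars false
variable {E : Type*} [NormedAddCommGroup E] [NormedSpace ℝ E] [MeasurableSpace E] [BorelSpace E]
  [SecondCountableTopology E]
  {μ : Measure E} [μ.IsAddLeftInvariant] [IsFiniteMeasureOnCompacts μ] [SFinite μ]
variable {Y : Type*} [NormedAddCommGroup Y] [NormedSpace ℝ Y]

/-- weighted `q`-energy of a function of `(t, x)` -/
def Jf (q : ℕ) (μ : Measure E) (φ : ℝ × E → Y) : ℝ≥0∞ :=
  ∫⁻ p, ENNReal.ofReal ((p.1 ^ (q + 1))⁻¹) * ‖φ p‖ₑ ^ q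
    ∂((volume.restrict (Ioi (0 : ℝ))).prod μ)

lemma Jf_meas (q : ℕ) {φ : ℝ × E → Y} (hφ : Continuous φ) :
    Measurable fun p : ℝ × E => ENNReal.ofReal ((p.1 ^ (q + 1))⁻¹) * ‖φ p‖ₑ ^ q := by
  have h1 : Measurable fun p : ℝ × E => ‖φ p‖ₑ := (continuous_enorm.comp hφ).measurable
  have h2 : Measurable fun p : ℝ × E => ENNReal.ofReal ((p.1 ^ (q + 1))⁻¹) :=
    ((measurable_fst.pow_const _).inv).ennreal_ofReal
  exact h2.mul (h1.pow_const q)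

lemma Jf_eq (q : ℕ) {φ : ℝ × E → Y} (hφ : Continuous φ) :
    Jf q μ φ = ∫⁻ t in Ioi (0 : ℝ), ENNReal.ofReal ((t ^ (q + 1))⁻¹) *
      ∫⁻ x, ‖φ (t, x)‖ₑ ^ q ∂μ := by
  unfold Jf
  rw [lintegral_prod _ (Jf_meas q hφ).aemeasurable]
  refine lintegral_congr fun t => ?_
  change ∫⁻ y, ENNReal.ofReal ((t ^ (q + 1))⁻¹) * ‖φ (t, y)‖ₑ ^ q ∂μ = _
  rw [lintegral_const_mul' _ _ ENNReal.ofReal_ne_top]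

lemma add_pow_le_two (q : ℕ) (a b : ℝ≥0∞) : (a + b) ^ q ≤ 2 ^ q * (a ^ q + b ^ q) := by
  rcases le_total a b with h | h
  · calc (a + b) ^ q ≤ (b + b) ^ q := by gcongr
      _ = 2 ^ q * b ^ q := by rw [← two_mul, mul_pow]
      _ ≤ _ := by gcongr; exact le_add_self
  · calc (a + b) ^ q ≤ (a + a) ^ q := by gcongr
      _ = 2 ^ q * a ^ q := by rw [← two_mul, mul_pow]
      _ ≤ _ := by gcongr; exact le_self_add

lemma Jf_add (q : ℕ) {φ ψ : ℝ × E → Y} (hφ : Continuous φ) :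
    Jf q μ (fun p => φ p + ψ p) ≤ 2 ^ q * (Jf q μ φ + Jf q μ ψ) := by
  unfold Jf
  rw [← lintegral_add_left (Jf_meas q hφ), ← lintegral_const_mul' _ _ (by simp)]
  refine lintegral_mono fun p => ?_
  calc ENNReal.ofReal ((p.1 ^ (q + 1))⁻¹) * ‖φ p + ψ p‖ₑ ^ q
      ≤ ENNReal.ofReal ((p.1 ^ (q + 1))⁻¹) * (2 ^ q * (‖φ p‖ₑ ^ q + ‖ψ p‖ₑ ^ q)) := by
        gcongr
        exact (pow_le_pow_left' (enorm_add_le _ _) q).trans (add_pow_le_two q _ _)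
    _ = _ := by ring

lemma Jf_smul (q : ℕ) (φ : ℝ × E → Y) {c : ℝ} (hc : |c| ≤ 1) :
    Jf q μ (fun p => c • φ p) ≤ Jf q μ φ := by
  unfold Jf
  refine lintegral_mono fun p => ?_
  gcongr
  rw [← ofReal_norm, ← ofReal_norm, norm_smul, Real.norm_eq_abs]
  refine ENNReal.ofReal_le_ofReal ?_
  nlinarith [norm_nonneg (φ p)]

lemma Jf_shift (q : ℕ) {φ : ℝ × E → Y} (hφ : Continuous φ) (v : E) :
    Jf q μ (fun p => φ (p.1, p.2 + p.1 • v)) = Jf q μ φ := by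
  rw [Jf_eq q hφ, Jf_eq q (by fun_prop)]
  refine lintegral_congr fun t => ?_
  congr 1
  exact lintegral_add_right_eq_self (μ := μ) (fun x => ‖φ (t, x)‖ₑ ^ q) (t • v)

lemma jensen_pow {q : ℕ} (hq : 1 ≤ q) {ψ : ℝ → Y} (hψ : Continuous ψ) :
    ‖∫ r in (0 : ℝ)..1, ψ r‖ₑ ^ q ≤ ∫⁻ r in Ioc (0 : ℝ) 1, ‖ψ r‖ₑ ^ q := by
  rw [intervalIntegral.integral_of_le zero_le_one]
  have : IsProbabilityMeasure (volume.restrict (Ioc (0 : ℝ) 1)) :=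
    ⟨by rw [Measure.restrict_apply_univ, Real.volume_Ioc]; simp⟩
  have hq0 : (0 : ℝ) < q := by exact_mod_cast hq
  have h1 : ‖∫ r in Ioc (0 : ℝ) 1, ψ r‖ₑ ≤ ∫⁻ r in Ioc (0 : ℝ) 1, ‖ψ r‖ₑ :=
    enorm_integral_le_lintegral_enorm _
  have h2 := eLpNorm'_le_eLpNorm'_of_exponent_le (p := 1) (q := q) one_pos (by exact_mod_cast hq)
    (volume.restrict (Ioc (0 : ℝ) 1)) hψ.aestronglyMeasurable
  simp only [eLpNorm', ENNReal.rpow_one, div_one, ENNReal.rpow_natCast] at h2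
  calc ‖∫ r in Ioc (0 : ℝ) 1, ψ r‖ₑ ^ q
      ≤ ((∫⁻ r in Ioc (0 : ℝ) 1, ‖ψ r‖ₑ ^ q) ^ (1 / (q : ℝ))) ^ q := by
        gcongr; exact h1.trans h2
    _ = _ := by
        rw [← ENNReal.rpow_natCast, ← ENNReal.rpow_mul, one_div, inv_mul_cancel₀ hq0.ne',
          ENNReal.rpow_one]

lemma Jf_integral {q : ℕ} (hq : 1 ≤ q) {ψ : ℝ → ℝ × E → Y}
    (hψ : Continuous fun z : ℝ × (ℝ × E) => ψ z.1 z.2) {K : ℝ≥0∞}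
    (hK : ∀ r ∈ Ioc (0 : ℝ) 1, Jf q μ (ψ r) ≤ K) :
    Jf q μ (fun p => ∫ r in (0 : ℝ)..1, ψ r p) ≤ K := by
  calc Jf q μ (fun p => ∫ r in (0 : ℝ)..1, ψ r p)
      ≤ ∫⁻ p, (∫⁻ r in Ioc (0 : ℝ) 1, ENNReal.ofReal ((p.1 ^ (q + 1))⁻¹) * ‖ψ r p‖ₑ ^ q)
        ∂((volume.restrict (Ioi (0 : ℝ))).prod μ) := by
        unfold Jf
        refine lintegral_mono fun p => ?_
        rw [lintegral_const_mul' _ _ ENNReal.ofReal_ne_top]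
        gcongr
        exact jensen_pow hq (by fun_prop)
    _ = ∫⁻ r in Ioc (0 : ℝ) 1, Jf q μ (ψ r) := by
        unfold Jf
        rw [lintegral_lintegral_swap]
        refine Measurable.aemeasurable ?_
        have h1 : Measurable fun z : (ℝ × E) × ℝ => ‖ψ z.2 z.1‖ₑ :=
          (continuous_enorm.comp (by fun_prop :
            Continuous fun z : (ℝ × E) × ℝ => ψ z.2 z.1)).measurable
        have h2 : Measurable fun z : (ℝ × E) × ℝ => ENNReal.ofReal ((z.1.1 ^ (q + 1))⁻¹) :=
          (((measurable_fst.comp measurable_fst).pow_const _).inv).ennreal_ofReal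
        exact h2.mul (h1.pow_const q)
    _ ≤ ∫⁻ r in Ioc (0 : ℝ) 1, K := setLIntegral_mono' measurableSet_Ioc hK
    _ = K := by
        rw [lintegral_const, Measure.restrict_apply_univ, Real.volume_Ioc]; simp

end JSec



section MixSec
set_option linter.unusedSectionVars false
variable {E : Type*} [NormedAddCommGroup E] [NormedSpace ℝ E] [MeasurableSpace E] [BorelSpace E]
  [SecondCountableTopology E]
  {μ : Measure E} [μ.IsAddLeftInvariant] [IsFiniteMeasureOnCompacts μ] [SFinite μ]
variable {Y : Type*} [NormedAddCommGroup Y] [NormedSpace ℝ Y]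

/-- existence of good convex functions on balls of `Y` -/
def GProp (Y : Type*) [NormedAddCommGroup Y] [NormedSpace ℝ Y] (q : ℕ) : Prop :=
  ∀ R : ℝ, 0 < R →
    ∃ (C₀ : ℝ) (G : Y → ℝ), 0 ≤ C₀ ∧ ContinuousOn G (closedBall 0 R) ∧
      (∀ x, ‖x‖ ≤ R → 0 ≤ G x ∧ G x ≤ C₀) ∧ G 0 = 0 ∧
      ∀ x y, ‖x‖ ≤ R → ‖y‖ ≤ R →
        G ((1 / 2 : ℝ) • (x + y)) + ‖x - y‖ ^ q ≤ (G x + G y) / 2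

/-- mixed second difference -/
def Mx (f : E → Y) (u v : E) (p : ℝ × E) : Y :=
  f (p.2 + p.1 • (u + v)) - f (p.2 + p.1 • u) - f (p.2 + p.1 • v) + f p.2

lemma Mx_continuous {f : E → Y} (hf : Continuous f) (u v : E) : Continuous (Mx f u v) := by
  unfold Mx; fun_prop

lemma mixed_bound (μ : Measure E) [μ.IsAddLeftInvariant] [IsFiniteMeasureOnCompacts μ] [SFinite μ]
    {q : ℕ} (hG : GProp Y q) (R : ℝ) (hR : 0 < R) :
    ∃ K : ℝ≥0∞, K ≠ ∞ ∧ ∀ (N : E → ℝ) (f : E → Y), IsNorm N → Continuous f → HasCompactSupport f →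
      (∀ x y, ‖f x - f y‖ ≤ N (x - y)) → ∀ u v, N u ≤ R → N v ≤ R →
      Jf q μ (Mx f u v) ≤ K * μ (tsupport f) := by
  obtain ⟨C₀, G, hC, hGc, hGb, hG0, hGq⟩ := hG R hR
  refine ⟨2 ^ q * (2 * (ENNReal.ofReal C₀ * 2)), by finiteness, ?_⟩
  intro N f hN hf hfs hlip u v hu hv
  set A : E → ℝ × E → Y :=
    fun u p => f (p.2 + (2 * p.1) • u) + f p.2 - (2 : ℝ) • f (p.2 + p.1 • u) with hA
  have hAc : ∀ u, Continuous (A u) := by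
    intro u; simp only [hA]; fun_prop
  have hAb : ∀ u, N u ≤ R → Jf q μ (A u) ≤ ENNReal.ofReal C₀ * (2 * μ (tsupport f)) := by
    intro u hu
    rw [Jf_eq q (hAc u)]
    refine second_diff hf hfs (u := u) (R := R) ?_ hGc hGb hG0 hGq
    intro x t ht
    refine (hlip _ _).trans ?_
    rw [add_sub_cancel_left, hN.2.1, abs_of_pos ht]
    nlinarith
  have e : Mx f u v = fun p => A ((1 / 2 : ℝ) • (u + v)) p
      + (-1 : ℝ) • A ((1 / 2 : ℝ) • (u - v)) (p.1, p.2 + p.1 • v) := by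
    funext p
    simp only [hA, Mx]
    have e1 : p.2 + (2 * p.1) • (1 / 2 : ℝ) • (u + v) = p.2 + p.1 • (u + v) := by module
    have e2 : p.2 + p.1 • v + (2 * p.1) • (1 / 2 : ℝ) • (u - v) = p.2 + p.1 • u := by module
    have e3 : p.2 + p.1 • v + p.1 • (1 / 2 : ℝ) • (u - v)
        = p.2 + p.1 • (1 / 2 : ℝ) • (u + v) := by module
    rw [e1, e2, e3]
    module
  rw [e]
  have n1 : N ((1 / 2 : ℝ) • (u + v)) ≤ R := by
    rw [hN.2.1, abs_of_pos (by norm_num)]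
    have := hN.add_le u v
    linarith
  have n2 : N ((1 / 2 : ℝ) • (u - v)) ≤ R := by
    rw [hN.2.1, abs_of_pos (by norm_num)]
    have := hN.add_le u (-v)
    rw [hN.neg, ← sub_eq_add_neg] at this
    linarith
  refine (Jf_add q (hAc _)).trans ?_
  rw [mul_assoc]
  gcongr
  have s2 : Jf q μ (fun p => (-1 : ℝ) • A ((1 / 2 : ℝ) • (u - v)) (p.1, p.2 + p.1 • v))
      ≤ ENNReal.ofReal C₀ * (2 * μ (tsupport f)) := by
    refine (Jf_smul q _ (by simp)).trans ?_
    rw [Jf_shift q (hAc _)]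
    exact hAb _ n2
  calc _ ≤ ENNReal.ofReal C₀ * (2 * μ (tsupport f)) + ENNReal.ofReal C₀ * (2 * μ (tsupport f)) :=
        add_le_add (hAb _ n1) s2
    _ = _ := by ring

lemma lin_identity [CompleteSpace Y] {b : ℝ → Y} (hb : Continuous b) (σ : ℝ) :
    b σ - σ • b 1 = ∫ r in (0 : ℝ)..1, ((-1 : ℝ) • (b (r + σ) - b r - b σ)
      + σ • (b (σ * r + 1) - b (σ * r) - b 1)) := by
  have ii : ∀ {h : ℝ → Y}, Continuous h → ∀ a c, IntervalIntegrable h volume a c :=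
    fun h a c => h.intervalIntegrable a c
  rw [intervalIntegral.integral_add (ii (by fun_prop) _ _) (ii (by fun_prop) _ _),
    intervalIntegral.integral_smul, intervalIntegral.integral_smul,
    intervalIntegral.smul_integral_comp_mul_left (fun r => b (r + 1) - b r - b 1) σ,
    mul_zero, mul_one,
    intervalIntegral.integral_sub (ii (by fun_prop) _ _) (ii (by fun_prop) _ _),
    intervalIntegral.integral_sub (ii (by fun_prop) _ _) (ii (by fun_prop) _ _),
    intervalIntegral.integral_sub (ii (by fun_prop) _ _) (ii (by fun_prop) _ _),
    intervalIntegral.integral_sub (ii (by fun_prop) _ _) (ii (by fun_prop) _ _),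
    intervalIntegral.integral_const, intervalIntegral.integral_const,
    intervalIntegral.integral_comp_add_right, intervalIntegral.integral_comp_add_right]
  have h1 : (∫ r in (0 : ℝ)..1, b r) + ∫ r in (1 : ℝ)..(1 + σ), b r = ∫ r in (0 : ℝ)..(1 + σ), b r :=
    intervalIntegral.integral_add_adjacent_intervals (ii hb _ _) (ii hb _ _)
  have h2 : (∫ r in (0 : ℝ)..σ, b r) + ∫ r in σ..(1 + σ), b r = ∫ r in (0 : ℝ)..(1 + σ), b r :=
    intervalIntegral.integral_add_adjacent_intervals (ii hb _ _) (ii hb _ _)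
  rw [zero_add, zero_add, add_comm σ 1]
  have h3 : ∫ r in σ..(1 + σ), b r = (∫ r in (0 : ℝ)..1, b r) + (∫ r in (1 : ℝ)..(1 + σ), b r)
      - ∫ r in (0 : ℝ)..σ, b r := by rw [h1, ← h2]; abel
  rw [h3]
  module

lemma lin_bound [CompleteSpace Y] (μ : Measure E) [μ.IsAddLeftInvariant]
    [IsFiniteMeasureOnCompacts μ] [SFinite μ] {q : ℕ} (hq : 1 ≤ q) (hG : GProp Y q) :
    ∃ K : ℝ≥0∞, K ≠ ∞ ∧ ∀ (N : E → ℝ) (f : E → Y), IsNorm N → Continuous f → HasCompactSupport f →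
      (∀ x y, ‖f x - f y‖ ≤ N (x - y)) → ∀ (e : E) (σ : ℝ), N e ≤ 1 → |σ| ≤ 1 →
      Jf q μ (fun p => (f (p.2 + p.1 • σ • e) - f p.2) - σ • (f (p.2 + p.1 • e) - f p.2))
        ≤ K * μ (tsupport f) := by
  obtain ⟨K, hK, H⟩ := mixed_bound μ hG 1 one_pos
  refine ⟨2 ^ q * (K + K), by finiteness, ?_⟩
  intro N f hN hf hfs hlip e σ he hσ
  have HM := H N f hN hf hfs hlip
  set ψ : ℝ → ℝ × E → Y := fun r p => (-1 : ℝ) • Mx f (r • e) (σ • e) p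
    + σ • Mx f ((σ * r) • e) e p with hψ
  have eq : (fun p : ℝ × E => (f (p.2 + p.1 • σ • e) - f p.2) - σ • (f (p.2 + p.1 • e) - f p.2))
      = fun p => ∫ r in (0 : ℝ)..1, ψ r p := by
    funext p
    have := lin_identity (b := fun r => f (p.2 + p.1 • r • e) - f p.2) (by fun_prop) σ
    simp only [one_smul] at this
    rw [this]
    congr 1
    funext r
    simp only [hψ, Mx]
    have e1 : (r + σ) • e = r • e + σ • e := add_smul _ _ _
    have e2 : (σ * r + 1) • e = (σ * r) • e + e := by module
    rw [e1, e2]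
    congr 2 <;> abel
  rw [eq]
  refine Jf_integral hq ?_ ?_
  · simp only [hψ, Mx]; fun_prop
  · intro r hr
    have hN1 : ∀ c : ℝ, |c| ≤ 1 → N (c • e) ≤ 1 := by
      intro c hc
      rw [hN.2.1]
      nlinarith [hN.nonneg e, abs_nonneg c]
    have hr1 : |r| ≤ 1 := by rw [abs_of_pos hr.1]; exact hr.2
    refine (Jf_add q ((Mx_continuous hf _ _).const_smul _)).trans ?_
    rw [mul_assoc, add_mul]
    gcongr
    · exact (Jf_smul q _ (by simp)).trans (HM _ _ (hN1 r hr1) (hN1 σ hσ))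
    · refine (Jf_smul q _ hσ).trans (HM _ _ (hN1 _ ?_) he)
      rw [abs_mul]; nlinarith [abs_nonneg σ, abs_nonneg r]

lemma err_bound [CompleteSpace Y] (μ : Measure E) [μ.IsAddLeftInvariant]
    [IsFiniteMeasureOnCompacts μ] [SFinite μ] {q : ℕ} (hq : 1 ≤ q) (hG : GProp Y q)
    {ι : Type*} [DecidableEq ι] (s : Finset ι) :
    ∃ K : ℝ≥0∞, K ≠ ∞ ∧ ∀ (N : E → ℝ) (f : E → Y), IsNorm N → Continuous f → HasCompactSupport f →
      (∀ x y, ‖f x - f y‖ ≤ N (x - y)) → ∀ (e : ι → E) (σ : ι → ℝ), (∀ i, N (e i) ≤ 1) →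
      (∀ i, |σ i| ≤ 1) →
      Jf q μ (fun p => f (p.2 + p.1 • ∑ i ∈ s, σ i • e i) - f p.2
          - ∑ i ∈ s, σ i • (f (p.2 + p.1 • e i) - f p.2))
        ≤ K * μ (tsupport f) := by
  induction s using Finset.induction_on with
  | empty =>
    refine ⟨0, by simp, ?_⟩
    intro N f hN hf hfs hlip e σ he hσ
    have : q ≠ 0 := by omega
    simp [Jf, this]
  | insert i s hi ih =>
    obtain ⟨K₁, hK₁, H₁⟩ := ih
    obtain ⟨K₂, hK₂, H₂⟩ := lin_bound (E := E) μ hq hG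
    obtain ⟨K₃, hK₃, H₃⟩ := mixed_bound (E := E) μ hG (s.card + 1) (by positivity)
    refine ⟨2 ^ q * (K₁ + 2 ^ q * (K₂ + K₃)), by finiteness, ?_⟩
    intro N f hN hf hfs hlip e σ he hσ
    have eq : (fun p : ℝ × E => f (p.2 + p.1 • ∑ j ∈ insert i s, σ j • e j) - f p.2
          - ∑ j ∈ insert i s, σ j • (f (p.2 + p.1 • e j) - f p.2))
        = fun p => (f (p.2 + p.1 • ∑ j ∈ s, σ j • e j) - f p.2
          - ∑ j ∈ s, σ j • (f (p.2 + p.1 • e j) - f p.2))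
          + (((f (p.2 + p.1 • σ i • e i) - f p.2) - σ i • (f (p.2 + p.1 • e i) - f p.2))
            + Mx f (∑ j ∈ s, σ j • e j) (σ i • e i) p) := by
      funext p
      rw [Finset.sum_insert hi, Finset.sum_insert hi, Mx, add_comm (σ i • e i)]
      abel
    rw [eq]
    refine (Jf_add q (by fun_prop)).trans ?_
    have b1 := H₁ N f hN hf hfs hlip e σ he hσ
    have b2 := H₂ N f hN hf hfs hlip (e i) (σ i) (he i) (hσ i)
    have hN1 : ∀ j, N (σ j • e j) ≤ 1 := by
      intro j
      rw [hN.2.1]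
      nlinarith [hN.nonneg (e j), abs_nonneg (σ j), he j, hσ j]
    have b3 := H₃ N f hN hf hfs hlip (∑ j ∈ s, σ j • e j) (σ i • e i)
      (by
        refine (hN.sum_le s _).trans ((Finset.sum_le_sum fun j _ => hN1 j).trans ?_)
        simp)
      (by
        have : (0 : ℝ) ≤ s.card := by positivity
        linarith [hN1 i])
    calc _ ≤ 2 ^ q * (K₁ * μ (tsupport f) + 2 ^ q * (K₂ * μ (tsupport f) + K₃ * μ (tsupport f))) := by
          gcongr
          exact (Jf_add q (by fun_prop)).trans (by gcongr)
      _ = _ := by ring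

end MixSec



section AuerSec
variable {n : ℕ} {N : EuclideanSpace ℝ (Fin n) → ℝ}

lemma exists_auerbach (hN : IsNorm N) :
    ∃ b : Module.Basis (Fin n) ℝ (EuclideanSpace ℝ (Fin n)), (∀ i, N (b i) ≤ 1) ∧
      ∀ z i, |b.repr z i| ≤ N z := by
  classical
  set B : Module.Basis (Fin n) ℝ (EuclideanSpace ℝ (Fin n)) :=
    (EuclideanSpace.basisFun (Fin n) ℝ).toBasis with hB
  set K : Set (Fin n → EuclideanSpace ℝ (Fin n)) := Set.pi univ fun _ => {x | N x ≤ 1} with hK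
  have hKc : IsCompact K := isCompact_univ_pi fun _ => hN.isCompact_le 1
  have hKn : K.Nonempty := ⟨0, fun i _ => by simp [hN.zero]⟩
  have hcont : Continuous fun v : Fin n → EuclideanSpace ℝ (Fin n) => |B.det v| := by
    have e0 : (fun v : Fin n → EuclideanSpace ℝ (Fin n) => |B.det v|)
        = fun v => |(B.toMatrix v).det| := by
      funext v; rw [Module.Basis.det_apply]
    rw [e0]
    refine Continuous.abs ?_
    refine Continuous.matrix_det ?_
    refine continuous_matrix fun i j => ?_
    simp only [Module.Basis.toMatrix_apply]
    have : Continuous fun x : EuclideanSpace ℝ (Fin n) => B.coord i x :=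
      LinearMap.continuous_of_finiteDimensional (B.coord i)
    exact this.comp (continuous_apply j)
  obtain ⟨v, hv, hmax⟩ := hKc.exists_isMaxOn hKn hcont.continuousOn
  have hvK : ∀ i, N (v i) ≤ 1 := fun i => hv i trivial
  have hdet : B.det v ≠ 0 := by
    intro h0
    have hNB : ∀ i, 0 < N (B i) := by
      intro i
      refine lt_of_le_of_ne (hN.nonneg _) fun h => ?_
      exact B.ne_zero i (hN.1 _ h.symm)
    have hmem : (fun i => (N (B i))⁻¹ • B i) ∈ K := by
      intro i _
      change N ((N (B i))⁻¹ • B i) ≤ 1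
      rw [hN.2.1, abs_of_pos (inv_pos.2 (hNB i)), inv_mul_cancel₀ (hNB i).ne']
    have := hmax hmem
    simp only [mem_ofPred_eq, h0, abs_zero] at this
    have e : B.det (fun i => (N (B i))⁻¹ • B i) = (∏ i, (N (B i))⁻¹) * B.det B := by
      rw [B.det.map_smul_univ, smul_eq_mul]
    rw [e, B.det_self, mul_one] at this
    have hp : 0 < ∏ i, (N (B i))⁻¹ := Finset.prod_pos fun i _ => inv_pos.2 (hNB i)
    rw [abs_of_pos hp] at this
    linarith
  obtain ⟨li, sp⟩ := (Module.Basis.is_basis_iff_det B).2 (isUnit_iff_ne_zero.2 hdet)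
  set b := Module.Basis.mk li sp.ge with hb
  have hbv : ∀ i, b i = v i := fun i => by rw [hb, Module.Basis.mk_apply]
  have hcr : ∀ i z, B.det (Function.update v i z) = B.det v * b.repr z i := by
    intro i
    have : (B.det.toMultilinearMap.toLinearMap v i) = B.det v • b.coord i := by
      refine b.ext fun j => ?_
      rw [hbv j]
      change B.det (Function.update v i (v j)) = B.det v * b.repr (v j) i
      rw [← hbv j, b.repr_self]
      by_cases hij : i = j
      · subst hij
        rw [hbv]; simp
      · rw [hbv, B.det.map_update_self v hij, Finsupp.single_eq_of_ne hij, mul_zero]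
    intro z
    have := LinearMap.congr_fun this z
    exact this
  have h1 : ∀ i z, N z ≤ 1 → |b.repr z i| ≤ 1 := by
    intro i z hz
    have hmem : Function.update v i z ∈ K := by
      intro j _
      change N (Function.update v i z j) ≤ 1
      by_cases hij : j = i
      · subst hij; simpa using hz
      · rw [Function.update_of_ne hij]; exact hvK j
    have := hmax hmem
    simp only [mem_ofPred_eq] at this
    rw [hcr, abs_mul] at this
    have hp : 0 < |B.det v| := abs_pos.2 hdet
    by_contra! h
    nlinarith
  refine ⟨b, fun i => by rw [hbv]; exact hvK i, fun z i => ?_⟩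
  rcases (hN.nonneg z).eq_or_lt with h | h
  · have := hN.1 z h.symm
    subst this
    simp [hN.zero]
  · have := h1 i ((N z)⁻¹ • z) (by
      rw [hN.2.1, abs_of_pos (inv_pos.2 h), inv_mul_cancel₀ h.ne'])
    rw [map_smul, Finsupp.smul_apply, smul_eq_mul, abs_mul, abs_of_pos (inv_pos.2 h),
      inv_mul_le_iff₀ h, mul_one] at this
    exact this

lemma ball_avg (hN : IsNorm N) (x : EuclideanSpace ℝ (Fin n)) {t : ℝ} (ht : 0 < t)
    {φ : EuclideanSpace ℝ (Fin n) → ℝ≥0∞} (hφ : Measurable φ) :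
    (∫⁻ y in {y | N (y - x) ≤ t}, φ y) / volume {y | N (y - x) ≤ t}
      = (volume {y | N y ≤ 1})⁻¹ * ∫⁻ z in {z | N z ≤ 1}, φ (x + t • z) := by
  have mB := hN.measurableSet_ball x t
  have m1 : MeasurableSet {z | N z ≤ 1} := by simpa using hN.measurableSet_ball 0 1
  have key : ∫⁻ z in {z | N z ≤ 1}, φ (x + t • z)
      = ENNReal.ofReal ((t ^ n)⁻¹) * ∫⁻ y in {y | N (y - x) ≤ t}, φ y := by
    set h : EuclideanSpace ℝ (Fin n) → ℝ≥0∞ := fun y => {y | N (y - x) ≤ t}.indicator φ (x + y)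
      with hh
    have mh : Measurable h := (hφ.indicator mB).comp (measurable_const_add x)
    have e1 : ∫⁻ y in {y | N (y - x) ≤ t}, φ y = ∫⁻ y, h y := by
      rw [← lintegral_indicator mB, hh,
        lintegral_add_left_eq_self (fun y => {y | N (y - x) ≤ t}.indicator φ y) x]
    have e2 : ∫⁻ z in {z | N z ≤ 1}, φ (x + t • z) = ∫⁻ z, h (t • z) := by
      rw [← lintegral_indicator m1]
      refine lintegral_congr fun z => ?_
      have iff1 : N (x + t • z - x) ≤ t ↔ N z ≤ 1 := by
        rw [add_sub_cancel_left, hN.2.1, abs_of_pos ht]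
        constructor
        · intro h; by_contra! h'; nlinarith
        · intro h; nlinarith
      by_cases hz : N z ≤ 1
      · rw [indicator_of_mem (show z ∈ {z | N z ≤ 1} from hz), hh]
        simp only
        rw [indicator_of_mem (show x + t • z ∈ {y | N (y - x) ≤ t} from iff1.2 hz)]
      · rw [indicator_of_notMem (show z ∉ {z | N z ≤ 1} from hz), hh]
        simp only
        rw [indicator_of_notMem (show x + t • z ∉ {y | N (y - x) ≤ t} from fun h => hz (iff1.1 h))]
    rw [e1, e2, ← lintegral_map mh (measurable_const_smul t), Measure.map_addHaar_smul _ ht.ne',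
      lintegral_smul_measure, finrank_euclideanSpace_fin, abs_of_pos (by positivity), smul_eq_mul]
  have htn : ENNReal.ofReal (t ^ n) ≠ 0 := (ENNReal.ofReal_pos.2 (by positivity)).ne'
  rw [key, hN.volume_ball x ht, ENNReal.div_eq_inv_mul,
    ENNReal.mul_inv (Or.inl htn) (Or.inl ENNReal.ofReal_ne_top),
    ENNReal.ofReal_inv_of_pos (by positivity)]
  ring

end AuerSec



section FinSec
variable {Y : Type*} [NormedAddCommGroup Y] [NormedSpace ℝ Y]

lemma continuous_of_lipN {n : ℕ} {N : EuclideanSpace ℝ (Fin n) → ℝ} (hN : IsNorm N)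
    {f : EuclideanSpace ℝ (Fin n) → Y} (hf : ∀ x y, ‖f x - f y‖ ≤ N (x - y)) : Continuous f := by
  rw [continuous_iff_continuousAt]
  intro x
  rw [ContinuousAt, tendsto_iff_norm_sub_tendsto_zero]
  have h : Filter.Tendsto (fun y => N (y - x)) (nhds x) (nhds 0) := by
    have hc : Continuous fun y => N (y - x) := hN.continuous.comp (by fun_prop)
    have := hc.tendsto x
    simpa [hN.zero] using this
  exact squeeze_zero (fun _ => norm_nonneg _) (fun y => hf y x) h

lemma dorronsoro_of_G [CompleteSpace Y] {q : ℕ} (hq : 2 ≤ q) (hG : GProp Y q) (n : ℕ) :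
    ∃ C : ℝ, 0 < C ∧ ∀ N : EuclideanSpace ℝ (Fin n) → ℝ, IsNorm N →
      DorronsoroIneq (q : ℝ) C N Y := by
  classical
  obtain ⟨K, hK, hbd⟩ := err_bound (volume : Measure (EuclideanSpace ℝ (Fin n)))
    (by omega : 1 ≤ q) hG (Finset.univ : Finset (Fin n))
  refine ⟨K.toReal + 1, by positivity, fun N hN f hfs hlip => ?_⟩
  have hf : Continuous f := continuous_of_lipN hN hlip
  obtain ⟨b, hb1, hb2⟩ := exists_auerbach hN
  set V : ℝ≥0∞ := volume {y : EuclideanSpace ℝ (Fin n) | N y ≤ 1} with hV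
  have hV0 : V ≠ 0 := hN.volume_one_pos.ne'
  have hVt : V ≠ ∞ := hN.volume_one_lt_top.ne
  have m1 : MeasurableSet {z | N z ≤ 1} := by simpa using hN.measurableSet_ball 0 1
  set err : EuclideanSpace ℝ (Fin n) → ℝ × EuclideanSpace ℝ (Fin n) → Y := fun z p =>
    f (p.2 + p.1 • z) - f p.2 - ∑ i, b.repr z i • (f (p.2 + p.1 • b i) - f p.2) with herr
  have hcoord : ∀ i, Continuous fun z => b.repr z i := fun i =>
    LinearMap.continuous_of_finiteDimensional (b.coord i)
  have hec : Continuous fun r : (ℝ × EuclideanSpace ℝ (Fin n)) × EuclideanSpace ℝ (Fin n) =>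
      err r.2 r.1 := by
    simp only [herr]
    refine Continuous.sub (by fun_prop) ?_
    refine continuous_finsetSum _ fun i _ => ?_
    exact ((hcoord i).comp continuous_snd).smul (by fun_prop)
  have hez : ∀ z, Continuous (err z) := fun z =>
    hec.comp (Continuous.prodMk continuous_id continuous_const)
  have hJ : ∀ z, N z ≤ 1 → Jf q volume (err z) ≤ K * volume (tsupport f) := by
    intro z hz
    have := hbd N f hN hf hfs hlip b (fun i => b.repr z i) hb1 (fun i => (hb2 z i).trans hz)
    simpa only [herr, b.sum_repr] using this
  set W : (ℝ × EuclideanSpace ℝ (Fin n)) × EuclideanSpace ℝ (Fin n) → ℝ≥0∞ := fun r =>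
    ENNReal.ofReal ((r.1.1 ^ (q + 1))⁻¹) * ‖err r.2 r.1‖ₑ ^ q with hW
  have hWm : Measurable W := by
    have h1 : Measurable fun r : (ℝ × EuclideanSpace ℝ (Fin n)) × EuclideanSpace ℝ (Fin n) =>
        ‖err r.2 r.1‖ₑ := (continuous_enorm.comp hec).measurable
    have h2 : Measurable fun r : (ℝ × EuclideanSpace ℝ (Fin n)) × EuclideanSpace ℝ (Fin n) =>
        ENNReal.ofReal ((r.1.1 ^ (q + 1))⁻¹) :=
      (((measurable_fst.comp measurable_fst).pow_const _).inv).ennreal_ofReal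
    exact h2.mul (h1.pow_const q)
  set H : ℝ × EuclideanSpace ℝ (Fin n) → ℝ≥0∞ := fun p =>
    ∫⁻ z in {z | N z ≤ 1}, W (p, z) with hH
  have hHm : Measurable H := hWm.lintegral_prod_right'
  have hpt : ∀ x : EuclideanSpace ℝ (Fin n), ∀ t ∈ Ioi (0 : ℝ),
      (⨅ Λ : EuclideanSpace ℝ (Fin n) →ᵃ[ℝ] Y,
            (∫⁻ y in {y : EuclideanSpace ℝ (Fin n) | N (y - x) ≤ t},
                (‖f y - Λ y‖₊ : ℝ≥0∞) ^ (q : ℝ))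
              / volume {y : EuclideanSpace ℝ (Fin n) | N (y - x) ≤ t})
          / ENNReal.ofReal (t ^ ((q : ℝ) + 1)) ≤ V⁻¹ * H (t, x) := by
    intro x t ht
    have ht : 0 < t := ht
    set L : EuclideanSpace ℝ (Fin n) →ₗ[ℝ] Y :=
      ∑ i, (b.coord i).smulRight (f (x + t • b i) - f x) with hL
    have hLa : ∀ z, L z = ∑ i, b.repr z i • (f (x + t • b i) - f x) := by
      intro z; simp [hL, LinearMap.sum_apply]
    set Λ : EuclideanSpace ℝ (Fin n) →ᵃ[ℝ] Y :=
      (t⁻¹ • L).toAffineMap + AffineMap.const ℝ _ (f x - t⁻¹ • L x) with hΛ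
    have hΛa : ∀ z, f (x + t • z) - Λ (x + t • z) = err z (t, x) := by
      intro z
      have : Λ (x + t • z) = L z + f x := by
        simp only [hΛ, AffineMap.coe_add, Pi.add_apply, LinearMap.coe_toAffineMap,
          LinearMap.smul_apply, AffineMap.const_apply, map_add, map_smul]
        rw [smul_smul, mul_inv_cancel₀ ht.ne', one_smul]
        abel
      rw [this, hLa]
      simp only [herr]
      abel
    have hφm : Measurable fun y => (‖f y - Λ y‖₊ : ℝ≥0∞) ^ (q : ℝ) := by
      have hΛc : Continuous Λ := AffineMap.continuous_of_finiteDimensional Λ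
      have : Measurable fun y => ‖f y - Λ y‖ₑ :=
        (continuous_enorm.comp (hf.sub hΛc)).measurable
      exact this.pow_const _
    have hpow : t ^ ((q : ℝ) + 1) = t ^ (q + 1) := by
      rw [← Real.rpow_natCast]; push_cast; rfl
    have htp : 0 < t ^ (q + 1) := by positivity
    calc _ ≤ ((∫⁻ y in {y : EuclideanSpace ℝ (Fin n) | N (y - x) ≤ t},
                (‖f y - Λ y‖₊ : ℝ≥0∞) ^ (q : ℝ))
              / volume {y : EuclideanSpace ℝ (Fin n) | N (y - x) ≤ t})
          / ENNReal.ofReal (t ^ ((q : ℝ) + 1)) := by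
          gcongr
          exact iInf_le _ Λ
      _ = V⁻¹ * H (t, x) := by
          rw [ball_avg hN x ht hφm, hpow, ENNReal.div_eq_inv_mul,
            ← ENNReal.ofReal_inv_of_pos htp, mul_left_comm]
          congr 1
          simp only [hH, hW]
          rw [lintegral_const_mul' _ _ ENNReal.ofReal_ne_top]
          congr 1
          refine lintegral_congr fun z => ?_
          rw [hΛa, ENNReal.rpow_natCast]
          rfl
  calc _ ≤ ∫⁻ x : EuclideanSpace ℝ (Fin n), ∫⁻ t in Ioi (0 : ℝ), V⁻¹ * H (t, x) := by
        refine lintegral_mono fun x => ?_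
        exact setLIntegral_mono' measurableSet_Ioi (hpt x)
    _ = ∫⁻ p, V⁻¹ * H p ∂((volume.restrict (Ioi (0 : ℝ))).prod volume) := by
        rw [lintegral_prod_symm _ (hHm.const_mul _).aemeasurable]
    _ = V⁻¹ * ∫⁻ p, H p ∂((volume.restrict (Ioi (0 : ℝ))).prod volume) := by
        rw [lintegral_const_mul _ hHm]
    _ = V⁻¹ * ∫⁻ z in {z | N z ≤ 1}, Jf q volume (err z) := by
        congr 1
        simp only [hH]
        rw [lintegral_lintegral_swap (hWm.aemeasurable)]
        rfl
    _ ≤ V⁻¹ * ∫⁻ z in {z : EuclideanSpace ℝ (Fin n) | N z ≤ 1}, K * volume (tsupport f) := by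
        gcongr 1
        exact setLIntegral_mono' m1 hJ
    _ = K * volume (tsupport f) := by
        rw [setLIntegral_const, ← hV, mul_comm _ V, ← mul_assoc, ENNReal.inv_mul_cancel hV0 hVt,
          one_mul]
    _ ≤ _ := by
        gcongr
        rw [← ENNReal.ofReal_toReal hK]
        refine ENNReal.ofReal_le_ofReal ?_
        rw [ENNReal.toReal_ofReal ENNReal.toReal_nonneg]
        linarith

end FinSec

/-- **Theorem (characterization of superreflexivity by a Dorronsoro estimate).** -/
theorem statement5 (Y : Type*) [NormedAddCommGroup Y] [NormedSpace ℝ Y] [CompleteSpace Y] :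
    (AdmitsEquivUniformlyConvexNorm Y ↔
      (∃ q : ℝ, 2 ≤ q ∧ ∀ n : ℕ, 0 < n → ∃ C : ℝ, 0 < C ∧
        ∀ N : EuclideanSpace ℝ (Fin n) → ℝ, IsNorm N → DorronsoroIneq q C N Y)) ∧
    ((∃ q : ℝ, 2 ≤ q ∧ ∀ n : ℕ, 0 < n → ∃ C : ℝ, 0 < C ∧
        ∀ N : EuclideanSpace ℝ (Fin n) → ℝ, IsNorm N → DorronsoroIneq q C N Y) ↔
      (∃ q C : ℝ, 2 ≤ q ∧ 2 ≤ C ∧ ∃ n₀ : ℕ, 0 < n₀ ∧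
        ∃ N₀ : EuclideanSpace ℝ (Fin n₀) → ℝ, IsNorm N₀ ∧ DorronsoroIneq q C N₀ Y)) := by
  have h12 : AdmitsEquivUniformlyConvexNorm Y →
      (∃ q : ℝ, 2 ≤ q ∧ ∀ n : ℕ, 0 < n → ∃ C : ℝ, 0 < C ∧
        ∀ N : EuclideanSpace ℝ (Fin n) → ℝ, IsNorm N → DorronsoroIneq q C N Y) := by
    intro h
    obtain ⟨q, hq, hG⟩ := exists_G h
    exact ⟨q, by exact_mod_cast hq, fun n _ => dorronsoro_of_G hq hG n⟩
  have h23 : (∃ q : ℝ, 2 ≤ q ∧ ∀ n : ℕ, 0 < n → ∃ C : ℝ, 0 < C ∧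
        ∀ N : EuclideanSpace ℝ (Fin n) → ℝ, IsNorm N → DorronsoroIneq q C N Y) →
      (∃ q C : ℝ, 2 ≤ q ∧ 2 ≤ C ∧ ∃ n₀ : ℕ, 0 < n₀ ∧
        ∃ N₀ : EuclideanSpace ℝ (Fin n₀) → ℝ, IsNorm N₀ ∧ DorronsoroIneq q C N₀ Y) := by
    rintro ⟨q, hq, h⟩
    obtain ⟨C, hC, hD⟩ := h 1 one_pos
    refine ⟨q, max C 2, hq, le_max_right _ _, 1, one_pos, fun x => ‖x‖, isNorm_norm _, ?_⟩
    intro f hfs hlip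
    refine (hD _ (isNorm_norm _) f hfs hlip).trans ?_
    gcongr
    exact le_max_left _ _
  have h31 : (∃ q C : ℝ, 2 ≤ q ∧ 2 ≤ C ∧ ∃ n₀ : ℕ, 0 < n₀ ∧
        ∃ N₀ : EuclideanSpace ℝ (Fin n₀) → ℝ, IsNorm N₀ ∧ DorronsoroIneq q C N₀ Y) →
      AdmitsEquivUniformlyConvexNorm Y := by
    rintro ⟨q, C, hq, -, n, hn, N, hN, hD⟩
    exact ucnorm_of_dorronsoro hn hN hq hD
  exact ⟨⟨h12, fun h => h31 (h23 h)⟩, ⟨h23, fun h => h12 (h31 h)⟩⟩
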